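/- Let α, β ≥ 1 and ε ∈ (0,1). There exists a constant C depending only on α, β, ε such that for every multiplicative function g : ℕ → ℝ with g(n) ≥ 0 for all n, g(p^v) ≤ α^v for all primes p and all integers v ≥ 1, and g(n) ≤ β n^{ε³/1000} for all n ≥ 1, and for all reals X, Y, H with 2 ≤ X^ε ≤ Y ≤ X and 1 ≤ H ≤ X, one has ∑_{l=1}^{⌊H⌋} ∑_{X ≤ n ≤ X+Y} g(n) g(n+l) ≤ C · H · Y · ( ∏_{p ≤ X, p prime} (1 + (g(p) − 1)/p) )². -/

import Mathlib

open Finset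

/-!
Write `P = ∏_{p ≤ X} (1 + (g(p) - 1)/p)`. Cut `n (n + l)` at a threshold `w`: let `a` and `b` be the
parts of `n` and `n + l` composed of primes below `w`. If `w ≥ X ^ (1 / s)`, the cofactors have
`O(s)` prime factors, so that `g(n) g(n + l) ≤ α ^ O(s) g(a) g(b)`. If moreover `ab` is at most a
small power of `X`, Selberg's sieve of dimension two bounds the number of such `n` by
`O(Y / (ab) ∏_{p < w} (1 - 1/p)²)` on average over `l`. Summing over smooth `a` and `b` turns
`∏_{p < w} (1 - 1/p)²` into `P²`, at the cost of a factor `exp (O(s))` for the primes between `w`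
and `X`.

The threshold is `X ^ (1 / R)`, with `R` large in terms of `ε`, whenever the smooth part of
`n (n + l)` is then small. Otherwise lower it, prime by prime, until the smooth part has size
`X ^ c`, say with `w ≈ X ^ (1 / r)`. Rankin's trick gains `exp (- c K r)` from a lower bound on the
smooth part, for any constant `K`, and this beats `α ^ O(r) exp (O(r))`, so that the sum over `r`
converges. The process fails only if one of `n` and `n + l` is divisible by a large power of a
prime or by a large number with bounded prime factors. Such pairs are a proportion `X ^ (-δ)` of
all, which compensates the trivial bound for `g`.
-/

namespace Shiu

/-- The divisors of `n` that do not exceed `y`. -/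
noncomputable def divisorsLE (n : ℕ) (y : ℝ) : Finset ℕ :=
  {d ∈ n.divisors | (d : ℝ) ≤ y}

theorem mem_divisorsLE {n d : ℕ} {y : ℝ} (hn : n ≠ 0) :
    d ∈ divisorsLE n y ↔ d ∣ n ∧ (d : ℝ) ≤ y := by
  simp [divisorsLE, hn]

section SelbergSieve

open BoundingSieve
open scoped ArithmeticFunction.Moebius

theorem sum_divisors_moebius (n : ℕ) : ∑ d ∈ n.divisors, (μ d : ℝ) = if n = 1 then 1 else 0 := by
  rw [← ArithmeticFunction.one_apply (R := ℝ),
    ← ArithmeticFunction.coe_zeta_mul_coe_moebius, ArithmeticFunction.coe_zeta_mul_apply]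
  simp

theorem sum_divisors_dvd_moebius {l m : ℕ} (hm : Squarefree m) (hl : l ∣ m) :
    ∑ d ∈ m.divisors with l ∣ d, (μ d : ℝ) = if l = m then (μ l : ℝ) else 0 := by
  obtain ⟨k, rfl⟩ := hl
  have hl0 : l ≠ 0 := left_ne_zero_of_mul hm.ne_zero
  have hk0 : k ≠ 0 := right_ne_zero_of_mul hm.ne_zero
  have hinj : Set.InjOn (l * ·) (k.divisors : Set ℕ) := fun _ _ _ _ h =>
    Nat.eq_of_mul_eq_mul_left (Nat.pos_of_ne_zero hl0) h
  have himage : {d ∈ (l * k).divisors | l ∣ d} = k.divisors.image (l * ·) := by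
    ext d
    simp only [mem_filter, Nat.mem_divisors, mem_image]
    constructor
    · rintro ⟨⟨hd, -⟩, e, rfl⟩
      exact ⟨e, ⟨Nat.dvd_of_mul_dvd_mul_left (Nat.pos_of_ne_zero hl0) hd, hk0⟩, rfl⟩
    · rintro ⟨e, ⟨he, -⟩, rfl⟩
      exact ⟨⟨Nat.mul_dvd_mul_left l he, hm.ne_zero⟩, dvd_mul_right l e⟩
  have hmul : ∀ e ∈ k.divisors, (μ (l * e) : ℝ) = μ l * μ e := by
    intro e he
    have hcop : l.Coprime e :=
      (Nat.coprime_of_squarefree_mul hm).coprime_dvd_right (Nat.dvd_of_mem_divisors he)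
    exact_mod_cast ArithmeticFunction.isMultiplicative_moebius.map_mul_of_coprime hcop
  rw [himage, sum_image hinj, sum_congr rfl hmul, ← mul_sum, sum_divisors_moebius]
  by_cases hk : k = 1 <;> simp [hk, hl0]

/-- The denominator `∑_{m ∣ P, m ≤ y} g(m)` of Selberg's upper bound, `g` being the multiplicative
function with `g(p) = ν(p) / (1 - ν(p))`. -/
noncomputable def selbergSum (s : BoundingSieve) (y : ℝ) : ℝ :=
  ∑ m ∈ divisorsLE s.prodPrimes y, s.selbergTerms m

/-- The coefficients minimising Selberg's quadratic form among those with value `1` at `1` and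
support in `[1, y]`. -/
noncomputable def selbergWeight (s : BoundingSieve) (y : ℝ) (d : ℕ) : ℝ :=
  μ d / (s.nu d * selbergSum s y) * ∑ m ∈ divisorsLE s.prodPrimes y with d ∣ m, s.selbergTerms m

variable {s : BoundingSieve} {y : ℝ}

theorem selbergTerms_pos_of_mem {m : ℕ} (hm : m ∈ divisorsLE s.prodPrimes y) :
    0 < s.selbergTerms m :=
  selbergTerms_pos ((mem_divisorsLE prodPrimes_ne_zero).1 hm).1

theorem selbergSum_pos (hy : 1 ≤ y) : 0 < selbergSum s y :=
  sum_pos (fun _ hm => selbergTerms_pos_of_mem hm)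
    ⟨1, (mem_divisorsLE prodPrimes_ne_zero).2 (by simpa using hy)⟩

theorem selbergWeight_one (hy : 1 ≤ y) : selbergWeight s y 1 = 1 := by
  have hS := (selbergSum_pos (s := s) hy).ne'
  have hall : {m ∈ divisorsLE s.prodPrimes y | 1 ∣ m} = divisorsLE s.prodPrimes y :=
    filter_true_of_mem fun m _ => one_dvd m
  rw [selbergWeight, hall, ← selbergSum, s.nu_mult.map_one]
  simp [hS]

theorem selbergWeight_eq_zero_of_lt {d : ℕ} (hd : y < d) : selbergWeight s y d = 0 := by
  rw [selbergWeight, filter_false_of_mem, sum_empty, mul_zero]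
  intro m hm hdm
  obtain ⟨hmP, hmy⟩ := (mem_divisorsLE prodPrimes_ne_zero).1 hm
  have : d ≤ m := Nat.le_of_dvd (Nat.pos_of_ne_zero (ne_zero_of_dvd_ne_zero prodPrimes_ne_zero hmP))
    hdm
  exact (hd.trans_le (Nat.cast_le.2 this)).not_ge hmy

theorem sum_nu_mul_selbergWeight {l : ℕ} (hl : l ∣ s.prodPrimes) :
    ∑ d ∈ s.prodPrimes.divisors with l ∣ d, s.nu d * selbergWeight s y d =
      if (l : ℝ) ≤ y then μ l * s.selbergTerms l / selbergSum s y else 0 := by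
  have hterm : ∀ d ∈ s.prodPrimes.divisors, s.nu d * selbergWeight s y d =
      ∑ m ∈ divisorsLE s.prodPrimes y with d ∣ m, μ d * (s.selbergTerms m / selbergSum s y) := by
    intro d hd
    have hν := nu_ne_zero (Nat.dvd_of_mem_divisors hd)
    rw [selbergWeight, ← mul_sum, ← sum_div]
    field_simp
  have hinner : ∀ m ∈ divisorsLE s.prodPrimes y,
      ∑ d ∈ s.prodPrimes.divisors with l ∣ d ∧ d ∣ m, (μ d : ℝ) =
        if l = m then (μ l : ℝ) else 0 := by
    intro m hm
    have hmP := ((mem_divisorsLE prodPrimes_ne_zero).1 hm).1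
    rw [← filter_filter, filter_comm, Nat.divisors_filter_dvd_of_dvd prodPrimes_ne_zero hmP]
    by_cases hlm : l ∣ m
    · exact sum_divisors_dvd_moebius (squarefree_of_dvd_prodPrimes hmP) hlm
    · rw [filter_false_of_mem, sum_empty, if_neg (fun h => hlm h.dvd)]
      exact fun d hd hld => hlm (hld.trans (Nat.dvd_of_mem_divisors hd))
  calc ∑ d ∈ s.prodPrimes.divisors with l ∣ d, s.nu d * selbergWeight s y d
      = ∑ m ∈ divisorsLE s.prodPrimes y,
          (∑ d ∈ s.prodPrimes.divisors with l ∣ d ∧ d ∣ m, (μ d : ℝ)) *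
            (s.selbergTerms m / selbergSum s y) := by
        rw [sum_congr rfl fun d hd => hterm d (mem_of_mem_filter d hd)]
        simp_rw [sum_filter, sum_mul, ite_and, ite_mul, zero_mul]
        rw [sum_comm]
        refine sum_congr rfl fun d _ => ?_
        split_ifs <;> simp
    _ = ∑ m ∈ divisorsLE s.prodPrimes y,
          if l = m then μ l * s.selbergTerms l / selbergSum s y else 0 :=
        sum_congr rfl fun m hm => by
          rw [hinner m hm]
          split_ifs with h
          · rw [h, mul_div_assoc]
          · rw [zero_mul]
    _ = _ := by
        rw [sum_ite_eq]
        exact if_congr (by simp [mem_divisorsLE prodPrimes_ne_zero, hl]) rfl rfl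

theorem mainSum_selbergWeight (hy : 1 ≤ y) :
    s.mainSum (lambdaSquared (selbergWeight s y)) = 1 / selbergSum s y := by
  have hS := (selbergSum_pos (s := s) hy).ne'
  have hterm : ∀ l ∈ s.prodPrimes.divisors, (s.selbergTerms l)⁻¹ *
      (∑ d ∈ s.prodPrimes.divisors, if l ∣ d then s.nu d * selbergWeight s y d else 0) ^ 2 =
      if (l : ℝ) ≤ y then s.selbergTerms l / selbergSum s y ^ 2 else 0 := by
    intro l hl
    have hlP := Nat.dvd_of_mem_divisors hl
    have hg := (selbergTerms_pos hlP).ne'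
    have hμ : (μ l : ℝ) ^ 2 = 1 := by
      exact_mod_cast ArithmeticFunction.moebius_sq_eq_one_of_squarefree
        (squarefree_of_dvd_prodPrimes hlP)
    rw [← sum_filter, sum_nu_mul_selbergWeight hlP]
    split_ifs
    · field_simp
      rw [hμ]
    · simp
  rw [mainSum_lambdaSquared_eq_sum_mul_sum_sq, sum_congr rfl hterm, ← sum_filter, ← divisorsLE,
    ← sum_div, ← selbergSum]
  field_simp

theorem eq_and_eq_of_mul_eq_mul {d k k' n n' : ℕ} (hd : 0 < d) (hk : k ∣ d) (hk' : k' ∣ d)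
    (hn : d.Coprime n) (hn' : d.Coprime n') (h : k * n = k' * n') : k = k' ∧ n = n' := by
  obtain rfl : k = k' := by
    rw [← Nat.gcd_eq_left hk, ← Nat.gcd_eq_left hk', ← hn.symm.gcd_mul_right_cancel k,
      ← hn'.symm.gcd_mul_right_cancel k', h]
  exact ⟨rfl, Nat.eq_of_mul_eq_mul_left (Nat.pos_of_dvd_of_pos hk hd) h⟩

theorem sum_selbergTerms_dvd_le {d : ℕ} (hd : d ∣ s.prodPrimes) :
    ∑ m ∈ divisorsLE s.prodPrimes y with d ∣ m, s.selbergTerms m ≤ s.nu d * selbergSum s y := by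
  have hd0 : d ≠ 0 := ne_zero_of_dvd_ne_zero prodPrimes_ne_zero hd
  set M := {m ∈ divisorsLE s.prodPrimes y | d ∣ m}
  have hcop : ∀ m ∈ M, d.Coprime (m / d) := fun m hm => by
    obtain ⟨hmL, hdm⟩ := mem_filter.1 hm
    apply Nat.coprime_of_squarefree_mul
    rw [Nat.mul_div_cancel' hdm]
    exact squarefree_of_dvd_prodPrimes ((mem_divisorsLE prodPrimes_ne_zero).1 hmL).1
  have hterm : ∀ m ∈ M, (s.nu d)⁻¹ * s.selbergTerms m =
      ∑ k ∈ d.divisors, s.selbergTerms (k * (m / d)) := by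
    intro m hm
    have hsum := sum_divisors_selbergTerms_eq_selbergTerms_mul_nu_inv hd
    rw [← sum_filter, Nat.divisors_filter_dvd_of_dvd prodPrimes_ne_zero hd] at hsum
    have hk : ∀ k ∈ d.divisors, s.selbergTerms (k * (m / d)) =
        s.selbergTerms k * s.selbergTerms (m / d) := fun k hk =>
      selbergTerms_isMultiplicative.map_mul_of_coprime
        ((hcop m hm).coprime_dvd_left (Nat.dvd_of_mem_divisors hk))
    rw [sum_congr rfl hk, ← sum_mul, hsum, mul_right_comm,
      ← selbergTerms_isMultiplicative.map_mul_of_coprime (hcop m hm),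
      Nat.mul_div_cancel' (mem_filter.1 hm).2, mul_comm]
  have hinj : Set.InjOn (fun x : ℕ × ℕ => x.2 * (x.1 / d)) (M ×ˢ d.divisors : Finset (ℕ × ℕ)) := by
    intro x hx x' hx' h
    obtain ⟨hm, hk⟩ := mem_product.1 hx
    obtain ⟨hm', hk'⟩ := mem_product.1 hx'
    obtain ⟨hkk, hmm⟩ := eq_and_eq_of_mul_eq_mul (Nat.pos_of_ne_zero hd0)
      (Nat.dvd_of_mem_divisors hk) (Nat.dvd_of_mem_divisors hk') (hcop _ hm) (hcop _ hm') h
    exact Prod.ext (Nat.div_left_inj (mem_filter.1 hm).2 (mem_filter.1 hm').2 |>.1 hmm) hkk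
  have himage : (M ×ˢ d.divisors).image (fun x => x.2 * (x.1 / d)) ⊆ divisorsLE s.prodPrimes y := by
    rw [image_subset_iff]
    intro x hx
    obtain ⟨hm, hk⟩ := mem_product.1 hx
    obtain ⟨hmL, hdm⟩ := mem_filter.1 hm
    obtain ⟨hmP, hmy⟩ := (mem_divisorsLE prodPrimes_ne_zero).1 hmL
    have hdvd : x.2 * (x.1 / d) ∣ x.1 :=
      (Nat.mul_dvd_mul_right (Nat.dvd_of_mem_divisors hk) _).trans (Nat.mul_div_cancel' hdm).dvd
    have hm0 := Nat.pos_of_ne_zero (ne_zero_of_dvd_ne_zero prodPrimes_ne_zero hmP)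
    exact (mem_divisorsLE prodPrimes_ne_zero).2
      ⟨hdvd.trans hmP, (Nat.cast_le.2 (Nat.le_of_dvd hm0 hdvd)).trans hmy⟩
  rw [← inv_mul_le_iff₀ (nu_pos_of_dvd_prodPrimes hd), mul_sum, sum_congr rfl hterm,
    ← sum_product (f := fun x => s.selbergTerms (x.2 * (x.1 / d))),
    ← sum_image (f := fun n => s.selbergTerms n) hinj]
  exact sum_le_sum_of_subset_of_nonneg himage fun m hm _ => (selbergTerms_pos_of_mem hm).le

theorem abs_selbergWeight_le_one {d : ℕ} (hd : d ∣ s.prodPrimes) (hy : 1 ≤ y) :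
    |selbergWeight s y d| ≤ 1 := by
  have hS := selbergSum_pos (s := s) hy
  have hν := nu_pos_of_dvd_prodPrimes hd
  have hμ : |(μ d : ℝ)| = 1 := by
    exact_mod_cast ArithmeticFunction.abs_moebius_eq_one_of_squarefree
      (squarefree_of_dvd_prodPrimes hd)
  have hsum : 0 ≤ ∑ m ∈ divisorsLE s.prodPrimes y with d ∣ m, s.selbergTerms m :=
    sum_nonneg fun m hm => (selbergTerms_pos_of_mem (mem_of_mem_filter m hm)).le
  rw [selbergWeight, abs_mul, abs_div, hμ, abs_of_nonneg hsum, abs_of_pos (by positivity),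
    div_mul_eq_mul_div, one_mul, div_le_one (by positivity)]
  exact sum_selbergTerms_dvd_le hd

theorem sum_divisors_abs_lambdaSquared_mul_le (w F : ℕ → ℝ) (hF : ∀ d, 0 ≤ F d) :
    ∑ d ∈ s.prodPrimes.divisors, |lambdaSquared w d| * F d ≤
      ∑ d₁ ∈ s.prodPrimes.divisors, ∑ d₂ ∈ s.prodPrimes.divisors,
        |w d₁| * |w d₂| * F (d₁.lcm d₂) := by
  have hterm : ∀ d ∈ s.prodPrimes.divisors, |lambdaSquared w d| * F d ≤
      ∑ d₁ ∈ s.prodPrimes.divisors, ∑ d₂ ∈ s.prodPrimes.divisors,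
        if d = d₁.lcm d₂ then |w d₁| * |w d₂| * F d else 0 := by
    intro d hd
    have hsub := Nat.divisors_subset_of_dvd prodPrimes_ne_zero (Nat.dvd_of_mem_divisors hd)
    have hnonneg : ∀ d₁ d₂, 0 ≤ if d = d₁.lcm d₂ then |w d₁| * |w d₂| * F d else 0 := by
      intro d₁ d₂
      have := hF d
      positivity
    calc |lambdaSquared w d| * F d
        ≤ (∑ d₁ ∈ d.divisors, ∑ d₂ ∈ d.divisors,
            |if d = d₁.lcm d₂ then w d₁ * w d₂ else 0|) * F d := by
          gcongr
          · exact hF d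
          · exact (abs_sum_le_sum_abs _ _).trans (sum_le_sum fun _ _ => abs_sum_le_sum_abs _ _)
      _ = ∑ d₁ ∈ d.divisors, ∑ d₂ ∈ d.divisors,
            if d = d₁.lcm d₂ then |w d₁| * |w d₂| * F d else 0 := by
          simp_rw [sum_mul, apply_ite abs, abs_mul, abs_zero, ite_mul, zero_mul]
      _ ≤ _ := (sum_le_sum fun d₁ _ => sum_le_sum_of_subset_of_nonneg hsub
            fun d₂ _ _ => hnonneg d₁ d₂).trans <|
          sum_le_sum_of_subset_of_nonneg hsub fun d₁ _ _ => sum_nonneg fun d₂ _ => hnonneg d₁ d₂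
  refine (sum_le_sum hterm).trans (le_of_eq ?_)
  rw [sum_comm]
  refine sum_congr rfl fun d₁ hd₁ => ?_
  rw [sum_comm]
  refine sum_congr rfl fun d₂ hd₂ => ?_
  rw [sum_ite_eq_of_mem' _ _ _ (Nat.mem_divisors.2
    ⟨Nat.lcm_dvd (Nat.dvd_of_mem_divisors hd₁) (Nat.dvd_of_mem_divisors hd₂), prodPrimes_ne_zero⟩)]

theorem errSum_lambdaSquared_le {w : ℕ → ℝ} (hw : ∀ d, d ∣ s.prodPrimes → |w d| ≤ 1)
    (hw0 : ∀ d : ℕ, y < d → w d = 0) :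
    s.errSum (lambdaSquared w) ≤
      ∑ d₁ ∈ divisorsLE s.prodPrimes y, ∑ d₂ ∈ divisorsLE s.prodPrimes y, |s.rem (d₁.lcm d₂)| := by
  have hterm : ∀ d₁ ∈ s.prodPrimes.divisors, ∀ d₂ ∈ s.prodPrimes.divisors,
      |w d₁| * |w d₂| * |s.rem (d₁.lcm d₂)| ≤
        if (d₁ : ℝ) ≤ y then if (d₂ : ℝ) ≤ y then |s.rem (d₁.lcm d₂)| else 0 else 0 := by
    intro d₁ hd₁ d₂ hd₂
    split_ifs with h₁ h₂
    · have hw₁ := hw d₁ (Nat.dvd_of_mem_divisors hd₁)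
      have hw₂ := hw d₂ (Nat.dvd_of_mem_divisors hd₂)
      exact mul_le_of_le_one_left (abs_nonneg _) (mul_le_one₀ hw₁ (abs_nonneg _) hw₂)
    · simp [hw0 d₂ (not_le.1 h₂)]
    · simp [hw0 d₁ (not_le.1 h₁)]
  refine (sum_divisors_abs_lambdaSquared_mul_le w _ fun d => abs_nonneg _).trans ?_
  refine (sum_le_sum fun d₁ hd₁ => sum_le_sum (hterm d₁ hd₁)).trans (le_of_eq ?_)
  simp_rw [divisorsLE, sum_filter, ite_sum_zero]

theorem siftedSum_le_selberg (hy : 1 ≤ y) :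
    s.siftedSum ≤ s.totalMass / selbergSum s y +
      ∑ d₁ ∈ divisorsLE s.prodPrimes y, ∑ d₂ ∈ divisorsLE s.prodPrimes y, |s.rem (d₁.lcm d₂)| :=
  calc s.siftedSum
      ≤ s.totalMass * s.mainSum (lambdaSquared (selbergWeight s y)) +
          s.errSum (lambdaSquared (selbergWeight s y)) :=
        siftedSum_le_mainSum_errSum_of_upperMoebius _
          (upperMoebius_lambdaSquared _ (selbergWeight_one hy))
    _ ≤ _ := by
        rw [mainSum_selbergWeight hy, mul_one_div]
        gcongr
        exact errSum_lambdaSquared_le (fun _ hd => abs_selbergWeight_le_one hd hy)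
          fun d => selbergWeight_eq_zero_of_lt

end SelbergSieve

section Mertens

theorem prod_pow_div_dvd_factorial {P : Finset ℕ} (hP : ∀ p ∈ P, p.Prime) (N : ℕ) :
    ∏ p ∈ P, p ^ (N / p) ∣ N.factorial := by
  refine prod_dvd_of_isRelPrime (fun p hp q hq hpq => ?_) fun p hp => ?_
  · exact Nat.coprime_iff_isRelPrime.1 <|
      Nat.Coprime.pow _ _ ((Nat.coprime_primes (hP p hp) (hP q hq)).2 hpq)
  · rw [(hP p hp).pow_dvd_factorial_iff (b := Nat.log p N + 2) (by lia)]
    simpa using single_le_sum (f := fun i => N / p ^ i) (s := Ico 1 (Nat.log p N + 2))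
      (fun _ _ => Nat.zero_le _) (a := 1) (by simp)

theorem sum_div_mul_log_le {P : Finset ℕ} (hP : ∀ p ∈ P, p.Prime) {N : ℕ} :
    ∑ p ∈ P, ((N / p : ℕ) : ℝ) * Real.log p ≤ N * Real.log N := by
  have hpos : ∀ p ∈ P, (0 : ℝ) < (p : ℝ) ^ (N / p) := fun p hp =>
    pow_pos (Nat.cast_pos.2 (hP p hp).pos) _
  have hprod : (∏ p ∈ P, (p : ℝ) ^ (N / p)) ≤ (N : ℝ) ^ N := by
    exact_mod_cast (Nat.le_of_dvd N.factorial_pos (prod_pow_div_dvd_factorial hP N)).trans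
      N.factorial_le_pow
  have hlog := Real.log_le_log (prod_pos hpos) hprod
  rw [Real.log_prod fun p hp => (hpos p hp).ne'] at hlog
  simpa only [Real.log_pow] using hlog

theorem sum_log_div_le {z : ℝ} (hz : 2 ≤ z) {P : Finset ℕ} (hP : ∀ p ∈ P, p.Prime ∧ (p : ℝ) ≤ z) :
    ∑ p ∈ P, Real.log p / p ≤ 3 * Real.log z := by
  set N := ⌊z⌋₊
  have hN : 0 < (N : ℝ) := Nat.cast_pos.2 (Nat.floor_pos.2 (by linarith))
  have htheta : ∑ p ∈ P, Real.log p ≤ Real.log 4 * N := by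
    refine le_trans ?_ (Chebyshev.theta_le_log4_mul_x (x := N) (by positivity))
    rw [Chebyshev.theta_eq_sum_primesLE, Nat.floor_natCast]
    refine sum_le_sum_of_subset_of_nonneg (fun p hp => ?_) fun p _ _ => Real.log_natCast_nonneg p
    exact Nat.mem_primesLE.2 ⟨Nat.le_floor (hP p hp).2, (hP p hp).1⟩
  have hterm : ∀ p ∈ P,
      N * (Real.log p / p) ≤ ((N / p : ℕ) : ℝ) * Real.log p + Real.log p := fun p _ =>
    calc N * (Real.log p / p) = N / p * Real.log p := by ring
      _ ≤ (((N / p : ℕ) : ℝ) + 1) * Real.log p := by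
          gcongr
          rw [← Nat.floor_div_eq_div (K := ℝ)]
          exact (Nat.lt_floor_add_one _).le
      _ = _ := by ring
  have hsum : N * ∑ p ∈ P, Real.log p / p ≤ N * (Real.log N + Real.log 4) :=
    calc N * ∑ p ∈ P, Real.log p / p
        ≤ ∑ p ∈ P, ((N / p : ℕ) : ℝ) * Real.log p + ∑ p ∈ P, Real.log p := by
          rw [mul_sum, ← sum_add_distrib]
          exact sum_le_sum hterm
      _ ≤ N * Real.log N + Real.log 4 * N :=
          add_le_add (sum_div_mul_log_le fun p hp => (hP p hp).1) htheta
      _ = _ := by ring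
  have hNz : Real.log N ≤ Real.log z := Real.log_le_log hN (Nat.floor_le (by linarith))
  have hlog4 : Real.log 4 ≤ 2 * Real.log z := by
    rw [show (4 : ℝ) = 2 ^ 2 by norm_num, Real.log_pow]
    push_cast
    linarith [Real.log_le_log (by norm_num) hz]
  linarith [le_of_mul_le_mul_left hsum hN]

theorem sum_inv_le {z X : ℝ} (hz : 1 < z) (hX : 2 ≤ X) {P : Finset ℕ}
    (hP : ∀ p ∈ P, p.Prime ∧ z ≤ (p : ℝ) ∧ (p : ℝ) ≤ X) :
    ∑ p ∈ P, 1 / (p : ℝ) ≤ 3 * Real.log X / Real.log z := by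
  rw [le_div_iff₀ (Real.log_pos hz), sum_mul]
  refine le_trans (sum_le_sum fun p hp => ?_)
    (sum_log_div_le hX fun p hp => ⟨(hP p hp).1, (hP p hp).2.2⟩)
  rw [one_div_mul_eq_div]
  gcongr
  exact (hP p hp).2.1

end Mertens

section Rankin

theorem rpow_inv_log_le {z : ℝ} {n : ℕ} (hn : 0 < n) (hz : 1 < z) (hnz : (n : ℝ) ≤ z) :
    (n : ℝ) ^ (Real.log z)⁻¹ ≤ 1 + 3 * (Real.log n / Real.log z) := by
  have hn' : (0 : ℝ) < n := Nat.cast_pos.2 hn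
  have hlog : 0 < Real.log z := Real.log_pos hz
  set t := Real.log n / Real.log z with ht
  have ht0 : 0 ≤ t := div_nonneg (Real.log_natCast_nonneg n) hlog.le
  have ht1 : t ≤ 1 := (div_le_one hlog).2 (Real.log_le_log hn' hnz)
  have hexp := (abs_le.1 (Real.abs_exp_sub_one_sub_id_le (abs_le.2 ⟨by linarith, ht1⟩))).2
  rw [Real.rpow_def_of_pos hn', ← div_eq_mul_inv, ← ht]
  nlinarith

theorem sum_divisors_rpow_mul {f : ArithmeticFunction ℝ} (hf : f.IsMultiplicative) {P : ℕ}
    (hP : Squarefree P) (σ : ℝ) :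
    ∑ d ∈ P.divisors, f d * (d : ℝ) ^ σ = ∏ p ∈ P.primeFactors, (1 + f p * (p : ℝ) ^ σ) := by
  let F : ArithmeticFunction ℝ := ⟨fun n => f n * (n : ℝ) ^ σ, by simp⟩
  have hF : F.IsMultiplicative := by
    refine ⟨by simp [F, hf.map_one], fun {m n} hmn => ?_⟩
    simp only [F, ArithmeticFunction.coe_mk, hf.map_mul_of_coprime hmn, Nat.cast_mul,
      Real.mul_rpow (Nat.cast_nonneg m) (Nat.cast_nonneg n)]
    ring
  exact (hF.prodPrimeFactors_one_add_of_squarefree hP).symm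

theorem prod_one_add_mul_rpow_le {f : ℕ → ℝ} {P : Finset ℕ} {z : ℝ} {κ : ℕ} (hz : 2 ≤ z)
    (hP : ∀ p ∈ P, p.Prime ∧ (p : ℝ) ≤ z) (hf0 : ∀ p ∈ P, 0 ≤ f p)
    (hf : ∀ p ∈ P, f p ≤ κ / p) :
    ∏ p ∈ P, (1 + f p * (p : ℝ) ^ (Real.log z)⁻¹) ≤
      (∏ p ∈ P, (1 + f p)) * Real.exp (9 * κ) := by
  have hlog : 0 < Real.log z := Real.log_pos (by linarith)
  have hterm : ∀ p ∈ P, 1 + f p * (p : ℝ) ^ (Real.log z)⁻¹ ≤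
      (1 + f p) * Real.exp (3 * κ / Real.log z * (Real.log p / p)) := by
    intro p hp
    have hfp := hf0 p hp
    have hexp := Real.add_one_le_exp (3 * κ / Real.log z * (Real.log p / p))
    calc 1 + f p * (p : ℝ) ^ (Real.log z)⁻¹
        ≤ 1 + f p * (1 + 3 * (Real.log p / Real.log z)) := by
          gcongr
          exact rpow_inv_log_le (hP p hp).1.pos (by linarith) (hP p hp).2
      _ ≤ 1 + f p + κ / p * (3 * (Real.log p / Real.log z)) := by
          rw [mul_add, mul_one, ← add_assoc]
          gcongr
          exact hf p hp
      _ = 1 + f p + 3 * κ / Real.log z * (Real.log p / p) := by ring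
      _ ≤ (1 + f p) * (1 + 3 * κ / Real.log z * (Real.log p / p)) := by
          have : 0 ≤ f p * (3 * κ / Real.log z * (Real.log p / p)) := by positivity
          linarith
      _ ≤ _ := by gcongr; linarith
  calc _ ≤ ∏ p ∈ P, (1 + f p) * Real.exp (3 * κ / Real.log z * (Real.log p / p)) :=
        prod_le_prod (fun p hp => by have := hf0 p hp; positivity) hterm
    _ = (∏ p ∈ P, (1 + f p)) * Real.exp (3 * κ / Real.log z * ∑ p ∈ P, Real.log p / p) := by
        rw [prod_mul_distrib, ← Real.exp_sum, mul_sum]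
    _ ≤ (∏ p ∈ P, (1 + f p)) * Real.exp (3 * κ / Real.log z * (3 * Real.log z)) := by
        gcongr
        · exact prod_nonneg fun p hp => add_nonneg zero_le_one (hf0 p hp)
        · exact sum_log_div_le hz hP
    _ = _ := by
        congr 2
        field_simp
        ring

theorem sum_divisors_not_le_le {f : ArithmeticFunction ℝ} (hf : f.IsMultiplicative) {P : ℕ}
    (hP : Squarefree P) (hf0 : ∀ d, d ∣ P → 0 ≤ f d) {D σ : ℝ} (hD : 0 < D) (hσ : 0 ≤ σ) :
    ∑ d ∈ P.divisors with ¬ ((d : ℕ) : ℝ) ≤ D, f d ≤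
      (D ^ σ)⁻¹ * ∏ p ∈ P.primeFactors, (1 + f p * (p : ℝ) ^ σ) := by
  have hfnn : ∀ d ∈ P.divisors, 0 ≤ f d := fun d hd => hf0 d (Nat.dvd_of_mem_divisors hd)
  rw [← sum_divisors_rpow_mul hf hP, mul_sum]
  calc _ ≤ ∑ d ∈ P.divisors with ¬ ((d : ℕ) : ℝ) ≤ D, (D ^ σ)⁻¹ * (f d * (d : ℝ) ^ σ) := by
        refine sum_le_sum fun d hd => ?_
        obtain ⟨hdP, hdD⟩ := mem_filter.1 hd
        rw [← div_eq_inv_mul, le_div_iff₀ (by positivity)]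
        exact mul_le_mul_of_nonneg_left (Real.rpow_le_rpow hD.le (not_le.1 hdD).le hσ) (hfnn d hdP)
    _ ≤ _ := sum_le_sum_of_subset_of_nonneg (filter_subset _ _) fun d hd _ => by
        have := hfnn d hd
        positivity

theorem prod_one_add_le_two_mul_sum {f : ArithmeticFunction ℝ} (hf : f.IsMultiplicative) {P κ : ℕ}
    (hP : Squarefree P) {z : ℝ} (hz : 2 ≤ z) (hPz : ∀ p ∈ P.primeFactors, (p : ℝ) ≤ z)
    (hf0 : ∀ d, d ∣ P → 0 ≤ f d) (hfκ : ∀ p ∈ P.primeFactors, f p ≤ κ / p) :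
    ∏ p ∈ P.primeFactors, (1 + f p) ≤
      2 * ∑ d ∈ divisorsLE P (z ^ (9 * κ + 1)), f d := by
  have hlog : 0 < Real.log z := Real.log_pos (by linarith)
  have hfp : ∀ p ∈ P.primeFactors, 0 ≤ f p := fun p hp => hf0 p (Nat.dvd_of_mem_primeFactors hp)
  set V := ∏ p ∈ P.primeFactors, (1 + f p)
  have hV0 : 0 ≤ V := prod_nonneg fun p hp => add_nonneg zero_le_one (hfp p hp)
  have hV : ∑ d ∈ P.divisors, f d = V := (hf.prodPrimeFactors_one_add_of_squarefree hP).symm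
  have hzκ : (z ^ (9 * κ + 1)) ^ (Real.log z)⁻¹ = Real.exp (9 * κ + 1) := by
    rw [Real.rpow_def_of_pos (by positivity), Real.log_pow, mul_inv_cancel_right₀ hlog.ne']
    push_cast
    rfl
  have htail : ∑ d ∈ P.divisors with ¬ ((d : ℕ) : ℝ) ≤ z ^ (9 * κ + 1), f d ≤ V / 2 :=
    calc _ ≤ ((z ^ (9 * κ + 1)) ^ (Real.log z)⁻¹)⁻¹ *
            ∏ p ∈ P.primeFactors, (1 + f p * (p : ℝ) ^ (Real.log z)⁻¹) :=
          sum_divisors_not_le_le hf hP hf0 (by positivity) (inv_nonneg.2 hlog.le)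
      _ ≤ (Real.exp (9 * κ + 1))⁻¹ * (V * Real.exp (9 * κ)) := by
          rw [hzκ]
          gcongr
          exact prod_one_add_mul_rpow_le hz
            (fun p hp => ⟨Nat.prime_of_mem_primeFactors hp, hPz p hp⟩) hfp hfκ
      _ = V * (Real.exp 1)⁻¹ := by
          rw [Real.exp_add]
          field_simp
      _ ≤ V * 2⁻¹ := by
          gcongr
          linarith [Real.add_one_le_exp 1]
      _ = V / 2 := by ring
  have hsplit := sum_filter_add_sum_filter_not P.divisors (fun d : ℕ => (d : ℝ) ≤ z ^ (9 * κ + 1)) f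
  rw [← divisorsLE] at hsplit
  linarith

end Rankin

section Counting

/-- The natural numbers `n` with `X ≤ n ≤ X + Y`. -/
noncomputable def shortInterval (X Y : ℝ) : Finset ℕ := Icc ⌈X⌉₊ ⌊X + Y⌋₊

theorem mem_shortInterval {X Y : ℝ} (hXY : 0 ≤ X + Y) {n : ℕ} :
    n ∈ shortInterval X Y ↔ X ≤ n ∧ (n : ℝ) ≤ X + Y := by
  rw [shortInterval, mem_Icc, Nat.ceil_le, Nat.le_floor_iff hXY]

theorem abs_card_filter_modEq_sub_le {a b r : ℕ} (hab : a ≤ b) (hr : 0 < r) (v : ℕ) :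
    |(#{n ∈ Ico a b | n ≡ v [MOD r]} : ℝ) - ((b : ℝ) - a) / r| ≤ 1 := by
  have hmono : ⌈((a : ℚ) - v) / r⌉ ≤ ⌈((b : ℚ) - v) / r⌉ := by gcongr
  have hcard := Nat.Ico_filter_modEq_card a b hr v
  rw [max_eq_left (sub_nonneg.2 hmono)] at hcard
  have hcard' : (#{n ∈ Ico a b | n ≡ v [MOD r]} : ℚ) =
      ⌈((b : ℚ) - v) / r⌉ - ⌈((a : ℚ) - v) / r⌉ := by exact_mod_cast hcard
  have hsub : ((b : ℚ) - a) / r = (b - v) / r - (a - v) / r := by ring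
  have hrat : |(#{n ∈ Ico a b | n ≡ v [MOD r]} : ℚ) - ((b : ℚ) - a) / r| ≤ 1 := by
    rw [hcard', hsub, abs_le]
    constructor <;>
      linarith [Int.le_ceil (((b : ℚ) - v) / r), Int.ceil_lt_add_one (((b : ℚ) - v) / r),
        Int.le_ceil (((a : ℚ) - v) / r), Int.ceil_lt_add_one (((a : ℚ) - v) / r)]
  have hreal := (Rat.cast_le (K := ℝ)).2 hrat
  push_cast at hreal
  exact hreal

variable {X Y : ℝ}

theorem abs_card_shortInterval_filter_modEq_sub_le (hX : 0 ≤ X) (hY : 0 ≤ Y) {r : ℕ} (hr : 0 < r)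
    (v : ℕ) : |(#{n ∈ shortInterval X Y | n ≡ v [MOD r]} : ℝ) - Y / r| ≤ 2 := by
  have hceil := Nat.le_ceil X
  have hceil' := Nat.ceil_lt_add_one hX
  have hfloor := Nat.floor_le (add_nonneg hX hY)
  have hfloor' := Nat.lt_floor_add_one (X + Y)
  have hle : ⌈X⌉₊ ≤ ⌊X + Y⌋₊ + 1 :=
    Nat.ceil_le.2 (by push_cast; linarith)
  have hcard := abs_card_filter_modEq_sub_le hle hr v
  have hlength : |((⌊X + Y⌋₊ + 1 : ℕ) - ⌈X⌉₊ : ℝ) / r - Y / r| ≤ 1 := by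
    have hr1 : (1 : ℝ) ≤ r := Nat.one_le_cast.2 hr
    rw [← sub_div, abs_div, abs_of_pos (by linarith : (0 : ℝ) < r), div_le_one (by linarith)]
    refine le_trans (abs_le.2 ?_) hr1
    push_cast
    constructor <;> linarith
  rw [shortInterval, ← Finset.Ico_add_one_right_eq_Icc]
  linarith [abs_sub_le (#{n ∈ Ico ⌈X⌉₊ (⌊X + Y⌋₊ + 1) | n ≡ v [MOD r]} : ℝ)
    (((⌊X + Y⌋₊ + 1 : ℕ) - ⌈X⌉₊ : ℝ) / r) (Y / r)]

theorem exists_dvd_and_dvd_add {a b l : ℕ} (hb : 0 < b) (hl : a.gcd b ∣ l) :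
    ∃ v, a ∣ v ∧ b ∣ v + l := by
  have hgcd : 0 ≡ (b - 1) * l [MOD a.gcd b] := (Nat.modEq_zero_iff_dvd.2 (hl.mul_left _)).symm
  obtain ⟨v, hva, hvb⟩ := Nat.chineseRemainder' hgcd
  refine ⟨v, Nat.modEq_zero_iff_dvd.1 hva, Nat.modEq_zero_iff_dvd.1 ((hvb.add_right l).trans ?_)⟩
  rw [← Nat.succ_mul, Nat.succ_eq_add_one, Nat.sub_add_cancel hb]
  exact Nat.modEq_zero_iff_dvd.2 (dvd_mul_right b l)

theorem dvd_and_dvd_add_iff_modEq {a b l v n : ℕ} (hva : a ∣ v) (hvb : b ∣ v + l) :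
    a ∣ n ∧ b ∣ n + l ↔ n ≡ v [MOD a.lcm b] := by
  have ha : a ∣ n ↔ n ≡ v [MOD a] :=
    ⟨fun h => (Nat.modEq_zero_iff_dvd.2 h).trans (Nat.modEq_zero_iff_dvd.2 hva).symm,
      fun h => (h.dvd_iff dvd_rfl).2 hva⟩
  have hb : b ∣ n + l ↔ n ≡ v [MOD b] :=
    ⟨fun h => Nat.ModEq.add_right_cancel' l
      ((Nat.modEq_zero_iff_dvd.2 h).trans (Nat.modEq_zero_iff_dvd.2 hvb).symm),
      fun h => ((h.add_right l).dvd_iff dvd_rfl).2 hvb⟩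
  rw [ha, hb]
  simp only [Nat.modEq_iff_dvd, Int.natCast_dvd, Nat.lcm_dvd_iff]

theorem abs_card_dvd_and_dvd_add_sub_le (hX : 0 ≤ X) (hY : 0 ≤ Y) {a b l : ℕ} (ha : 0 < a)
    (hb : 0 < b) (hl : a.gcd b ∣ l) :
    |(#{n ∈ shortInterval X Y | a ∣ n ∧ b ∣ n + l} : ℝ) - Y / (a.lcm b)| ≤ 2 := by
  obtain ⟨v, hva, hvb⟩ := exists_dvd_and_dvd_add hb hl
  rw [filter_congr fun n _ => dvd_and_dvd_add_iff_modEq hva hvb]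
  exact abs_card_shortInterval_filter_modEq_sub_le hX hY (Nat.lcm_pos ha hb) v

theorem mul_dvd_and_mul_dvd_add_iff {a b l u v n : ℕ} (hu : u ≠ 0) (huv : u.Coprime v)
    (hua : u.Coprime a) (hvb : v.Coprime b) (hvl : v.Coprime l) :
    a * u ∣ n ∧ b * v ∣ n + l ↔
      (a ∣ n ∧ b ∣ n + l) ∧ u * v ∣ n * (n + l) ∧ (u * v).gcd n = u := by
  have hgcd : u ∣ n → (u * v).gcd n = u * v.gcd n := fun hun => by
    rw [Nat.gcd_comm, huv.gcd_mul, Nat.gcd_eq_right hun, Nat.gcd_comm]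
  constructor
  · rintro ⟨hau, hbv⟩
    have hun := (dvd_mul_left u a).trans hau
    have hvn := (dvd_mul_left v b).trans hbv
    have hcop : v.gcd n = 1 := Nat.eq_one_of_dvd_coprimes hvl (Nat.gcd_dvd_left v n)
      ((Nat.dvd_add_right (Nat.gcd_dvd_right v n)).1 ((Nat.gcd_dvd_left v n).trans hvn))
    exact ⟨⟨(dvd_mul_right a u).trans hau, (dvd_mul_right b v).trans hbv⟩,
      mul_dvd_mul hun hvn, by rw [hgcd hun, hcop, mul_one]⟩
  · rintro ⟨⟨han, hbn⟩, hdvd, heq⟩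
    have hun : u ∣ n := heq ▸ Nat.gcd_dvd_right (u * v) n
    have hcop : v.gcd n = 1 := by
      rw [hgcd hun] at heq
      exact (Nat.mul_eq_left hu).1 heq
    exact ⟨hua.symm.mul_dvd_of_dvd_of_dvd han hun, hvb.symm.mul_dvd_of_dvd_of_dvd hbn
      (Nat.Coprime.dvd_of_dvd_mul_left hcop ((dvd_mul_left v u).trans hdvd))⟩

theorem gcd_mul_mul_of_coprime {a b u v : ℕ} (hub : u.Coprime b) (huv : u.Coprime v)
    (hva : v.Coprime a) : (a * u).gcd (b * v) = a.gcd b := by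
  rw [Nat.Coprime.gcd_mul_right_cancel a (hub.mul_right huv),
    Nat.Coprime.gcd_mul_right_cancel_right b hva]

theorem lcm_mul_mul_of_coprime {a b u v : ℕ} (ha : 0 < a) (hub : u.Coprime b)
    (huv : u.Coprime v) (hva : v.Coprime a) :
    (a * u).lcm (b * v) = a.lcm b * (u * v) := by
  have hmul := Nat.gcd_mul_lcm (a * u) (b * v)
  rw [gcd_mul_mul_of_coprime hub huv hva] at hmul
  refine Nat.eq_of_mul_eq_mul_left (Nat.gcd_pos_of_pos_left b ha) ?_
  rw [hmul, ← mul_assoc (a.gcd b), Nat.gcd_mul_lcm]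
  ring

-- Each `n` counted is assigned to the divisor `u = gcd d n`; then `u ∣ n` and `d / u ∣ n + l`.
theorem abs_card_dvd_mul_add_sub_le (hX : 0 ≤ X) (hY : 0 ≤ Y) {a b l d : ℕ} (ha : 0 < a)
    (hb : 0 < b) (hl : a.gcd b ∣ l) (hd : Squarefree d) (hda : d.Coprime a) (hdb : d.Coprime b)
    (hdl : d.Coprime l) :
    |(#{n ∈ {n ∈ shortInterval X Y | a ∣ n ∧ b ∣ n + l} | d ∣ n * (n + l)} : ℝ) -
      #d.divisors / d * (Y / (a.lcm b))| ≤ 2 * d := by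
  set S : Finset ℕ := {n ∈ {n ∈ shortInterval X Y | a ∣ n ∧ b ∣ n + l} | d ∣ n * (n + l)} with hS
  have hmaps : ∀ n ∈ S, d.gcd n ∈ d.divisors := fun n _ =>
    Nat.mem_divisors.2 ⟨Nat.gcd_dvd_left d n, hd.ne_zero⟩
  have hfiber : ∀ u ∈ d.divisors, |(#{n ∈ S | d.gcd n = u} : ℝ) - Y / (a.lcm b) / d| ≤ 2 := by
    intro u hu
    obtain ⟨v, rfl⟩ := Nat.dvd_of_mem_divisors hu
    have hu0 : u ≠ 0 := left_ne_zero_of_mul hd.ne_zero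
    have hv0 : v ≠ 0 := right_ne_zero_of_mul hd.ne_zero
    have huv := Nat.coprime_of_squarefree_mul hd
    have hub := hdb.coprime_mul_right
    have hva := hda.coprime_mul_left
    have hset : {n ∈ S | (u * v).gcd n = u} =
        {n ∈ shortInterval X Y | a * u ∣ n ∧ b * v ∣ n + l} := by
      ext n
      simp only [hS, mem_filter, mul_dvd_and_mul_dvd_add_iff hu0 huv hda.coprime_mul_right
        hdb.coprime_mul_left hdl.coprime_mul_left, and_assoc]
    have hcard := abs_card_dvd_and_dvd_add_sub_le hX hY (l := l)
      (Nat.mul_pos ha (Nat.pos_of_ne_zero hu0)) (Nat.mul_pos hb (Nat.pos_of_ne_zero hv0))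
      (by rwa [gcd_mul_mul_of_coprime hub huv hva])
    rw [lcm_mul_mul_of_coprime ha hub huv hva, Nat.cast_mul, ← div_div] at hcard
    rwa [hset]
  have hmain : (#d.divisors : ℝ) / d * (Y / (a.lcm b)) =
      ∑ _u ∈ d.divisors, Y / (a.lcm b) / d := by
    rw [sum_const, nsmul_eq_mul]
    ring
  rw [card_eq_sum_card_fiberwise hmaps, hmain, Nat.cast_sum, ← sum_sub_distrib]
  calc _ ≤ ∑ u ∈ d.divisors, |(#{n ∈ S | d.gcd n = u} : ℝ) - Y / (a.lcm b) / d| :=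
        abs_sum_le_sum_abs _ _
    _ ≤ #d.divisors • (2 : ℝ) := sum_le_card_nsmul _ _ _ hfiber
    _ ≤ 2 * d := by
        rw [nsmul_eq_mul, mul_comm]
        gcongr
        exact Nat.card_divisors_le_self d

end Counting

section FixedDimension

open BoundingSieve

variable {s : BoundingSieve} {z c : ℝ} {κ : ℕ}

theorem prod_one_sub_nu_inv_le_selbergSum (hz : 2 ≤ z)
    (hsz : ∀ p ∈ s.prodPrimes.primeFactors, (p : ℝ) ≤ z)
    (hκ : ∀ p ∈ s.prodPrimes.primeFactors, s.nu p / (1 - s.nu p) ≤ κ / p) :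
    (∏ p ∈ s.prodPrimes.primeFactors, (1 - s.nu p))⁻¹ ≤ 2 * selbergSum s (z ^ (9 * κ + 1)) := by
  have hterm : ∀ p ∈ s.prodPrimes.primeFactors, s.selbergTerms p = s.nu p / (1 - s.nu p) :=
    fun p hp => by
      rw [selbergTerms_apply, (Nat.prime_of_mem_primeFactors hp).primeFactors, prod_singleton,
        div_eq_mul_inv]
  rw [← prod_inv_distrib, selbergSum]
  refine le_trans (prod_congr rfl fun p hp => ?_).le (prod_one_add_le_two_mul_sum
    selbergTerms_isMultiplicative s.prodPrimes_squarefree hz hsz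
    (fun d hd => (selbergTerms_pos hd).le) fun p hp => (hterm p hp).trans_le (hκ p hp))
  have hlt := s.nu_lt_one_of_prime p (Nat.prime_of_mem_primeFactors hp)
    (Nat.dvd_of_mem_primeFactors hp)
  rw [hterm p hp]
  field_simp [(sub_pos.2 hlt).ne']
  ring

theorem card_divisorsLE_le {n : ℕ} {y : ℝ} (hn : n ≠ 0) (hy : 0 ≤ y) :
    (#(divisorsLE n y) : ℝ) ≤ y := by
  have hsub : divisorsLE n y ⊆ Icc 1 ⌊y⌋₊ := fun d hd => by
    obtain ⟨hdn, hdy⟩ := (mem_divisorsLE hn).1 hd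
    exact mem_Icc.2 ⟨Nat.pos_of_dvd_of_pos hdn (Nat.pos_of_ne_zero hn), Nat.le_floor hdy⟩
  have hcard := card_le_card hsub
  rw [Nat.card_Icc, Nat.add_sub_cancel] at hcard
  exact (Nat.cast_le.2 hcard).trans (Nat.floor_le hy)

theorem sum_abs_rem_lcm_le {y : ℝ} (hy : 0 ≤ y) (hc : 0 ≤ c)
    (hrem : ∀ d, d ∣ s.prodPrimes → |s.rem d| ≤ c * d) :
    ∑ d₁ ∈ divisorsLE s.prodPrimes y, ∑ d₂ ∈ divisorsLE s.prodPrimes y, |s.rem (d₁.lcm d₂)| ≤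
      c * y ^ 4 := by
  have hs := s.prodPrimes_squarefree.ne_zero
  have hterm : ∀ d₁ ∈ divisorsLE s.prodPrimes y, ∀ d₂ ∈ divisorsLE s.prodPrimes y,
      |s.rem (d₁.lcm d₂)| ≤ c * y ^ 2 := by
    intro d₁ h₁ d₂ h₂
    obtain ⟨hd₁, hy₁⟩ := (mem_divisorsLE hs).1 h₁
    obtain ⟨hd₂, hy₂⟩ := (mem_divisorsLE hs).1 h₂
    have hpos : 0 < d₁ * d₂ :=
      Nat.mul_pos (Nat.pos_of_dvd_of_pos hd₁ (Nat.pos_of_ne_zero hs))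
        (Nat.pos_of_dvd_of_pos hd₂ (Nat.pos_of_ne_zero hs))
    calc |s.rem (d₁.lcm d₂)| ≤ c * (d₁.lcm d₂ : ℕ) := hrem _ (Nat.lcm_dvd hd₁ hd₂)
      _ ≤ c * (d₁ * d₂) := by
          gcongr
          exact_mod_cast Nat.le_of_dvd hpos (Nat.lcm_dvd_mul d₁ d₂)
      _ ≤ c * (y * y) := by gcongr
      _ = c * y ^ 2 := by ring
  have hcard := card_divisorsLE_le hs hy
  calc _ ≤ #(divisorsLE s.prodPrimes y) • (#(divisorsLE s.prodPrimes y) • (c * y ^ 2)) :=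
        sum_le_card_nsmul _ _ _ fun d₁ h₁ => sum_le_card_nsmul _ _ _ (hterm d₁ h₁)
    _ ≤ y * (y * (c * y ^ 2)) := by
        rw [nsmul_eq_mul, nsmul_eq_mul]
        gcongr
    _ = c * y ^ 4 := by ring

theorem siftedSum_le_of_dimension (hz : 2 ≤ z)
    (hsz : ∀ p ∈ s.prodPrimes.primeFactors, (p : ℝ) ≤ z)
    (hκ : ∀ p ∈ s.prodPrimes.primeFactors, s.nu p / (1 - s.nu p) ≤ κ / p)
    (hmass : 0 ≤ s.totalMass) (hc : 0 ≤ c) (hrem : ∀ d, d ∣ s.prodPrimes → |s.rem d| ≤ c * d) :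
    s.siftedSum ≤ 2 * s.totalMass * ∏ p ∈ s.prodPrimes.primeFactors, (1 - s.nu p) +
      c * z ^ (4 * (9 * κ + 1)) := by
  have hy : 1 ≤ z ^ (9 * κ + 1) := one_le_pow₀ (by linarith)
  have hsum := selbergSum_pos (s := s) hy
  have hprod : 0 < ∏ p ∈ s.prodPrimes.primeFactors, (1 - s.nu p) := prod_pos fun p hp =>
    sub_pos.2 (s.nu_lt_one_of_prime p (Nat.prime_of_mem_primeFactors hp)
      (Nat.dvd_of_mem_primeFactors hp))
  have hinv : (selbergSum s (z ^ (9 * κ + 1)))⁻¹ ≤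
      2 * ∏ p ∈ s.prodPrimes.primeFactors, (1 - s.nu p) := by
    have hle := prod_one_sub_nu_inv_le_selbergSum hz hsz hκ
    rw [inv_le_iff_one_le_mul₀ hprod] at hle
    rw [inv_le_iff_one_le_mul₀ hsum]
    linarith
  calc s.siftedSum ≤ _ := siftedSum_le_selberg hy
    _ ≤ s.totalMass * (2 * ∏ p ∈ s.prodPrimes.primeFactors, (1 - s.nu p)) +
        c * (z ^ (9 * κ + 1)) ^ 4 := by
      rw [div_eq_mul_inv]
      gcongr
      exact sum_abs_rem_lcm_le (by linarith) hc hrem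
    _ = _ := by
      rw [← pow_mul]
      ring

end FixedDimension

section SiftedPairs

/-- The primes below a real number `z`. -/
noncomputable def primesLT (z : ℝ) : Finset ℕ := Nat.primesBelow ⌈z⌉₊

theorem mem_primesLT {z : ℝ} {p : ℕ} : p ∈ primesLT z ↔ p.Prime ∧ (p : ℝ) < z := by
  rw [primesLT, Nat.mem_primesBelow, Nat.lt_ceil, and_comm]

/-- The natural number `n` is `z`-rough: it has no prime factor below `z`. -/
def IsRough (z : ℝ) (n : ℕ) : Prop := ∀ p, p.Prime → p ∣ n → z ≤ p

open Classical in
/-- The `n` with `X ≤ n ≤ X + Y` such that `a ∣ n` and `b ∣ n + l` with `z`-rough cofactors. -/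
noncomputable def siftedPairs (X Y z : ℝ) (a b l : ℕ) : Finset ℕ :=
  {n ∈ shortInterval X Y | (a ∣ n ∧ b ∣ n + l) ∧ IsRough z (n / a) ∧ IsRough z ((n + l) / b)}

theorem mem_siftedPairs {X Y z : ℝ} {a b l n : ℕ} :
    n ∈ siftedPairs X Y z a b l ↔ n ∈ shortInterval X Y ∧ (a ∣ n ∧ b ∣ n + l) ∧
      IsRough z (n / a) ∧ IsRough z ((n + l) / b) := by
  classical exact mem_filter

/-- The product of the primes below `z` that do not divide `m`. -/
noncomputable def coprimePrimorial (z : ℝ) (m : ℕ) : ℕ := ∏ p ∈ primesLT z with ¬ p ∣ m, p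

variable {X Y z : ℝ} {a b l m : ℕ}

theorem primeFactors_coprimePrimorial :
    (coprimePrimorial z m).primeFactors = {p ∈ primesLT z | ¬ p ∣ m} :=
  Nat.primeFactors_prod fun _ hp => (mem_primesLT.1 (mem_filter.1 hp).1).1

theorem squarefree_coprimePrimorial : Squarefree (coprimePrimorial z m) := by
  have hprime : ∀ p ∈ ({p ∈ primesLT z | ¬ p ∣ m} : Finset ℕ), p.Prime := fun p hp =>
    (mem_primesLT.1 (mem_filter.1 hp).1).1
  refine squarefree_prod_of_pairwise_isCoprime (fun p hp q hq hpq => ?_)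
    fun p hp => (hprime p hp).squarefree
  exact Nat.coprime_iff_isRelPrime.1 ((Nat.coprime_primes (hprime p hp) (hprime q hq)).2 hpq)

theorem coprime_of_dvd_coprimePrimorial {d : ℕ} (hd : d ∣ coprimePrimorial z m) : d.Coprime m := by
  refine Nat.Coprime.of_dvd_left hd (Nat.Coprime.prod_left fun p hp => ?_)
  obtain ⟨hpz, hpm⟩ := mem_filter.1 hp
  exact (mem_primesLT.1 hpz).1.coprime_iff_not_dvd.2 hpm

theorem dvd_of_prime_dvd_coprimePrimorial {p : ℕ} (hp : p.Prime) (hpm : p ∣ coprimePrimorial z m) :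
    (p : ℝ) < z ∧ ¬ p ∣ m := by
  have hmem : p ∈ (coprimePrimorial z m).primeFactors :=
    Nat.mem_primeFactors.2 ⟨hp, hpm, squarefree_coprimePrimorial.ne_zero⟩
  rw [primeFactors_coprimePrimorial, mem_filter, mem_primesLT] at hmem
  exact ⟨hmem.1.2, hmem.2⟩

theorem two_lt_of_prime_dvd_coprimePrimorial {p : ℕ} (hp : p.Prime)
    (hpm : p ∣ coprimePrimorial z (2 * m)) : 2 < p := by
  refine lt_of_le_of_ne hp.two_le fun h => ?_
  subst h
  exact (dvd_of_prime_dvd_coprimePrimorial hp hpm).2 (dvd_mul_right 2 m)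

/-- The density `d ↦ τ(d) / d` of the `n` with `d ∣ n (n + l)`, for squarefree `d` prime to `l`. -/
noncomputable def pairDensity : ArithmeticFunction ℝ :=
  ((ArithmeticFunction.sigma 0 : ArithmeticFunction ℕ) : ArithmeticFunction ℝ).pdiv
    ((ArithmeticFunction.id : ArithmeticFunction ℕ) : ArithmeticFunction ℝ)

theorem isMultiplicative_pairDensity : pairDensity.IsMultiplicative :=
  ArithmeticFunction.isMultiplicative_sigma.natCast.pdiv
    ArithmeticFunction.isMultiplicative_id.natCast

theorem pairDensity_apply (d : ℕ) : pairDensity d = (#d.divisors : ℝ) / d := by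
  simp [pairDensity, ArithmeticFunction.sigma_zero_apply]

theorem pairDensity_prime {p : ℕ} (hp : p.Prime) : pairDensity p = 2 / p := by
  rw [pairDensity_apply, hp.divisors, card_pair hp.one_lt.ne, Nat.cast_ofNat]

theorem injective_mul_add_self (l : ℕ) : Function.Injective fun n => n * (n + l) :=
  StrictMono.injective fun _ _ hmn => Nat.mul_lt_mul'' hmn (Nat.add_lt_add_right hmn l)

/-- The sieve removing, from the `n` with `X ≤ n ≤ X + Y`, `a ∣ n` and `b ∣ n + l`, those for
which `n (n + l)` has a prime factor below `z` not dividing `2 a b l`. A `BoundingSieve` sifts a set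
of integers, so the set actually sifted consists of the values `n (n + l)`. -/
noncomputable def pairSieve (X Y z : ℝ) (a b l : ℕ) : BoundingSieve where
  support := {n ∈ shortInterval X Y | a ∣ n ∧ b ∣ n + l}.image fun n => n * (n + l)
  prodPrimes := coprimePrimorial z (2 * (a * b * l))
  prodPrimes_squarefree := squarefree_coprimePrimorial
  weights _ := 1
  weights_nonneg _ := zero_le_one
  totalMass := Y / a.lcm b
  nu := pairDensity
  nu_mult := isMultiplicative_pairDensity
  nu_pos_of_prime p hp _ := by
    have := hp.pos
    rw [pairDensity_prime hp]
    positivity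
  nu_lt_one_of_prime p hp hdvd := by
    rw [pairDensity_prime hp, div_lt_one (Nat.cast_pos.2 hp.pos)]
    exact_mod_cast two_lt_of_prime_dvd_coprimePrimorial hp hdvd

theorem abs_rem_pairSieve_le (hX : 0 ≤ X) (hY : 0 ≤ Y) (ha : 0 < a) (hb : 0 < b)
    (hl : a.gcd b ∣ l) {d : ℕ} (hd : d ∣ (pairSieve X Y z a b l).prodPrimes) :
    |(pairSieve X Y z a b l).rem d| ≤ 2 * d := by
  have hcop : d.Coprime (a * b * l) := (coprime_of_dvd_coprimePrimorial hd).coprime_mul_left_right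
  have hmult : (pairSieve X Y z a b l).multSum d =
      (#{n ∈ {n ∈ shortInterval X Y | a ∣ n ∧ b ∣ n + l} | d ∣ n * (n + l)} : ℝ) := by
    simp only [BoundingSieve.multSum, pairSieve]
    rw [sum_image (injective_mul_add_self l).injOn, sum_boole]
  rw [BoundingSieve.rem, hmult]
  have hdab := hcop.coprime_mul_right_right
  have hbound := abs_card_dvd_mul_add_sub_le hX hY ha hb hl
    (squarefree_coprimePrimorial.squarefree_of_dvd hd) hdab.coprime_mul_right_right
    hdab.coprime_mul_left_right hcop.coprime_mul_left_right
  rwa [← pairDensity_apply] at hbound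

theorem card_siftedPairs_le_siftedSum :
    (#(siftedPairs X Y z a b l) : ℝ) ≤ (pairSieve X Y z a b l).siftedSum := by
  have hsum : (pairSieve X Y z a b l).siftedSum =
      #{n ∈ {n ∈ shortInterval X Y | a ∣ n ∧ b ∣ n + l} |
        (coprimePrimorial z (2 * (a * b * l))).Coprime (n * (n + l))} :=
    (sum_image (injective_mul_add_self l).injOn).trans (sum_boole _ _)
  rw [hsum]
  refine Nat.cast_le.2 (card_le_card fun n hn => ?_)
  obtain ⟨hnI, ⟨han, hbn⟩, hna, hnb⟩ := mem_siftedPairs.1 hn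
  refine mem_filter.2 ⟨mem_filter.2 ⟨hnI, han, hbn⟩, Nat.coprime_of_dvd fun p hp hpP hpn => ?_⟩
  obtain ⟨hpz, hpabl⟩ := dvd_of_prime_dvd_coprimePrimorial hp hpP
  rcases (hp.dvd_mul).1 hpn with h | h
  · rw [← Nat.mul_div_cancel' han] at h
    refine ((hp.dvd_mul).1 h).elim (fun hpa => hpabl ?_) fun h => (hna p hp h).not_gt hpz
    exact ((hpa.mul_right b).mul_right l).mul_left 2
  · rw [← Nat.mul_div_cancel' hbn] at h
    refine ((hp.dvd_mul).1 h).elim (fun hpb => hpabl ?_) fun h => (hnb p hp h).not_gt hpz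
    exact ((hpb.mul_left a).mul_right l).mul_left 2

theorem card_siftedPairs_le_add (hX : 0 ≤ X) (hY : 0 ≤ Y) (hz : 2 ≤ z) (ha : 0 < a) (hb : 0 < b)
    (hl : a.gcd b ∣ l) :
    (#(siftedPairs X Y z a b l) : ℝ) ≤
      2 * (Y / a.lcm b) * ∏ p ∈ primesLT z with ¬ p ∣ 2 * (a * b * l), (1 - 2 / (p : ℝ)) +
        2 * z ^ 220 := by
  have hprime : ∀ p ∈ (pairSieve X Y z a b l).prodPrimes.primeFactors,
      p.Prime ∧ 2 < p ∧ (p : ℝ) < z := fun p hp =>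
    have hp' := Nat.prime_of_mem_primeFactors hp
    have hdvd := Nat.dvd_of_mem_primeFactors hp
    ⟨hp', two_lt_of_prime_dvd_coprimePrimorial hp' hdvd,
      (dvd_of_prime_dvd_coprimePrimorial hp' hdvd).1⟩
  have hκ : ∀ p ∈ (pairSieve X Y z a b l).prodPrimes.primeFactors,
      (pairSieve X Y z a b l).nu p / (1 - (pairSieve X Y z a b l).nu p) ≤ (6 : ℕ) / p := by
    intro p hp
    obtain ⟨hp', hp2, -⟩ := hprime p hp
    have hp3 : (3 : ℝ) ≤ p := by exact_mod_cast hp2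
    have hp0 : 0 < (p : ℝ) - 2 := by linarith
    simp only [pairSieve, pairDensity_prime hp', one_sub_div (by linarith : (p : ℝ) ≠ 0)]
    rw [div_div_div_cancel_right₀ (by linarith), div_le_div_iff₀ hp0 (by linarith)]
    push_cast
    linarith
  have hsieve := siftedSum_le_of_dimension hz (fun p hp => (hprime p hp).2.2.le) hκ
    (by simp only [pairSieve]; positivity) zero_le_two
    fun d hd => abs_rem_pairSieve_le hX hY ha hb hl hd
  refine card_siftedPairs_le_siftedSum.trans (hsieve.trans_eq ?_)
  have hprod : ∏ p ∈ (pairSieve X Y z a b l).prodPrimes.primeFactors,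
      (1 - (pairSieve X Y z a b l).nu p) =
      ∏ p ∈ primesLT z with ¬ p ∣ 2 * (a * b * l), (1 - 2 / (p : ℝ)) :=
    prod_congr primeFactors_coprimePrimorial fun p hp => by
      simp only [pairSieve, pairDensity_prime (mem_primesLT.1 (mem_filter.1 hp).1).1]
  rw [hprod, pairSieve]

end SiftedPairs

section MertensProduct

/-- The proportion `∏_{p < z} (1 - 1/p)` of integers without prime factors below `z`. -/
noncomputable def mertensProd (z : ℝ) : ℝ := ∏ p ∈ primesLT z, (1 - 1 / (p : ℝ))

theorem mertensProd_pos (z : ℝ) : 0 < mertensProd z :=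
  prod_pos fun p hp => by
    have hp1 : (1 : ℝ) < p := by exact_mod_cast (mem_primesLT.1 hp).1.one_lt
    rw [sub_pos, div_lt_one (by linarith)]
    exact hp1

theorem inv_le_prod_primesBelow {n : ℕ} (hn : 1 ≤ n) :
    (n : ℝ)⁻¹ ≤ ∏ p ∈ Nat.primesBelow (n + 1), (1 - 1 / (p : ℝ)) := by
  induction n, hn using Nat.le_induction with
  | base => norm_num [Nat.primesBelow_succ]
  | succ n hn ih =>
    by_cases hp : (n + 1).Prime
    · rw [Nat.primesBelow_succ, if_pos hp, prod_insert (Nat.notMem_primesBelow _)]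
      calc ((n + 1 : ℕ) : ℝ)⁻¹ = (1 - 1 / ((n + 1 : ℕ) : ℝ)) * (n : ℝ)⁻¹ := by
            push_cast
            field_simp
            ring
        _ ≤ _ := by
            have h1 : (1 : ℝ) ≤ (n + 1 : ℕ) := by exact_mod_cast hp.one_lt.le
            gcongr
            rw [sub_nonneg]
            exact div_le_one_of_le₀ h1 (by positivity)
    · rw [Nat.primesBelow_succ, if_neg hp]
      refine le_trans ?_ ih
      gcongr
      exact n.le_succ

theorem inv_le_mertensProd {z : ℝ} (hz : 1 < z) : z⁻¹ ≤ mertensProd z := by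
  obtain ⟨n, hn⟩ : ∃ n, ⌈z⌉₊ = n + 1 := ⟨_, (Nat.succ_pred (Nat.ceil_pos.2 (by linarith)).ne').symm⟩
  have hn1 : 1 ≤ n := by
    have := Nat.lt_ceil.2 (by simpa using hz : ((1 : ℕ) : ℝ) < z)
    omega
  have hnz : (n : ℝ) < z := Nat.lt_ceil.1 (by omega)
  rw [mertensProd, primesLT, hn]
  exact (inv_anti₀ (Nat.cast_pos.2 hn1) hnz.le).trans (inv_le_prod_primesBelow hn1)

end MertensProduct

section Psi

/-- The factor `ψ(n) = ∏_{p ∣ n} (1 + 6/p)`, which bounds the loss from not sifting by the primes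
dividing `n`. -/
noncomputable def psi (n : ℕ) : ℝ := ∏ p ∈ n.primeFactors, (1 + 6 / (p : ℝ))

theorem one_le_one_add_six_div (p : ℕ) : (1 : ℝ) ≤ 1 + 6 / (p : ℝ) :=
  le_add_of_nonneg_right (by positivity)

theorem one_le_psi (n : ℕ) : 1 ≤ psi n :=
  one_le_prod fun p _ => one_le_one_add_six_div p

theorem psi_pos (n : ℕ) : 0 < psi n := zero_lt_one.trans_le (one_le_psi n)

theorem psi_le_of_dvd {m n : ℕ} (hn : n ≠ 0) (h : m ∣ n) : psi m ≤ psi n :=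
  prod_le_prod_of_subset_of_one_le (Nat.primeFactors_mono h hn) (fun _ _ => by positivity)
    fun p _ _ => one_le_one_add_six_div p

theorem psi_mul {m n : ℕ} (h : m.Coprime n) : psi (m * n) = psi m * psi n := by
  rw [psi, h.primeFactors_mul, prod_union h.disjoint_primeFactors, psi, psi]

theorem psi_mul_le {m n : ℕ} (hm : m ≠ 0) (hn : n ≠ 0) : psi (m * n) ≤ psi m * psi n := by
  rw [psi, psi, psi, Nat.primeFactors_mul hm hn, ← prod_union_inter]
  exact le_mul_of_one_le_right (prod_nonneg fun _ _ => by positivity)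
    (one_le_prod fun p _ => one_le_one_add_six_div p)

theorem psi_prime_pow {p k : ℕ} (hp : p.Prime) (hk : k ≠ 0) : psi (p ^ k) = 1 + 6 / (p : ℝ) := by
  rw [psi, Nat.primeFactors_prime_pow hk hp, prod_singleton]

theorem psi_two : psi 2 = 4 := by
  rw [psi, Nat.prime_two.primeFactors, prod_singleton]
  norm_num

theorem prod_not_dvd_one_sub_two_div_le {m : ℕ} (hm : m ≠ 0) (z : ℝ) :
    ∏ p ∈ primesLT z with ¬ p ∣ m, (1 - 2 / (p : ℝ)) ≤ mertensProd z ^ 2 * psi m := by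
  have hfactor : ∀ p ∈ primesLT z, (if ¬ p ∣ m then 1 - 2 / (p : ℝ) else 1) ≤
      (1 - 1 / (p : ℝ)) ^ 2 * if p ∣ m then 1 + 6 / (p : ℝ) else 1 := by
    intro p hp
    have hp2 : (2 : ℝ) ≤ p := by exact_mod_cast (mem_primesLT.1 hp).1.two_le
    have hx : 0 < 1 / (p : ℝ) := by positivity
    have hx2 : 1 / (p : ℝ) ≤ 1 / 2 := by gcongr
    rw [← mul_one_div 2 (p : ℝ), ← mul_one_div 6 (p : ℝ)]
    by_cases hpm : p ∣ m
    · simp only [hpm, not_true_eq_false, if_false, if_true]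
      nlinarith [mul_nonneg (mul_nonneg hx.le (by linarith : 0 ≤ 1 - 2 * (1 / (p : ℝ))))
        (by linarith : 0 ≤ 4 - 3 * (1 / (p : ℝ)))]
    · simp only [hpm, not_false_eq_true, if_false, if_true]
      nlinarith
  calc _ = ∏ p ∈ primesLT z, if ¬ p ∣ m then 1 - 2 / (p : ℝ) else 1 := prod_filter _ _
    _ ≤ ∏ p ∈ primesLT z, ((1 - 1 / (p : ℝ)) ^ 2 * if p ∣ m then 1 + 6 / (p : ℝ) else 1) := by
        refine prod_le_prod (fun p hp => ?_) hfactor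
        have hp2 : (2 : ℝ) ≤ p := by exact_mod_cast (mem_primesLT.1 hp).1.two_le
        split_ifs with hpm
        · exact zero_le_one
        · exact sub_nonneg.2 (div_le_one_of_le₀ hp2 (by linarith))
    _ = mertensProd z ^ 2 * ∏ p ∈ primesLT z with p ∣ m, (1 + 6 / (p : ℝ)) := by
        rw [prod_mul_distrib, prod_pow, mertensProd, prod_filter]
    _ ≤ _ := by
        refine mul_le_mul_of_nonneg_left ?_ (sq_nonneg _)
        refine prod_le_prod_of_subset_of_one_le (fun p hp => ?_) (fun _ _ => by positivity)
          fun p _ _ => one_le_one_add_six_div p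
        obtain ⟨hpz, hpm⟩ := mem_filter.1 hp
        exact Nat.mem_primeFactors.2 ⟨(mem_primesLT.1 hpz).1, hpm, hm⟩

theorem prod_primeFactors_one_add_eq_sum {N k : ℕ} (hk : k ∈ Icc 1 N) (f : ℕ → ℝ) :
    ∏ p ∈ k.primeFactors, (1 + f p) =
      ∑ T ∈ (Nat.primesLE N).powerset with ∏ p ∈ T, p ∣ k, ∏ p ∈ T, f p := by
  obtain ⟨hk1, hkN⟩ := mem_Icc.1 hk
  rw [prod_one_add]
  refine sum_congr (Finset.ext fun T => ?_) fun _ _ => rfl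
  rw [mem_powerset, mem_filter, mem_powerset]
  constructor
  · refine fun hT => ⟨fun p hp => ?_, prod_primes_dvd k
      (fun p hp => (Nat.prime_of_mem_primeFactors (hT hp)).prime)
      fun p hp => Nat.dvd_of_mem_primeFactors (hT hp)⟩
    exact Nat.mem_primesLE.2 ⟨(Nat.le_of_mem_primeFactors (hT hp)).trans hkN,
      Nat.prime_of_mem_primeFactors (hT hp)⟩
  · rintro ⟨hT, hdvd⟩ p hp
    exact Nat.mem_primeFactors.2 ⟨(Nat.mem_primesLE.1 (hT hp)).2,
      (dvd_prod_of_mem _ hp).trans hdvd, by omega⟩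

theorem sum_prod_primeFactors_one_add_le {f : ℕ → ℝ} (hf : ∀ p, 0 ≤ f p) (N : ℕ) :
    ∑ k ∈ Icc 1 N, ∏ p ∈ k.primeFactors, (1 + f p) ≤
      N * ∏ p ∈ Nat.primesLE N, (1 + f p / p) := by
  have hcount : ∀ T : Finset ℕ, ∑ k ∈ Icc 1 N with ∏ p ∈ T, p ∣ k, ∏ p ∈ T, f p ≤
      N * ∏ p ∈ T, f p / p := by
    intro T
    have hcard : #{k ∈ Icc 1 N | ∏ p ∈ T, p ∣ k} = N / ∏ p ∈ T, p :=
      Nat.Ioc_filter_dvd_card_eq_div N _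
    rw [sum_const, nsmul_eq_mul, hcard, prod_div_distrib, ← mul_div_assoc, mul_div_right_comm]
    refine mul_le_mul_of_nonneg_right ?_ (prod_nonneg fun p _ => hf p)
    rw [← Nat.cast_prod]
    exact Nat.cast_div_le
  calc _ = ∑ k ∈ Icc 1 N, ∑ T ∈ (Nat.primesLE N).powerset with ∏ p ∈ T, p ∣ k, ∏ p ∈ T, f p :=
        sum_congr rfl fun k hk => prod_primeFactors_one_add_eq_sum hk f
    _ = ∑ T ∈ (Nat.primesLE N).powerset, ∑ k ∈ Icc 1 N with ∏ p ∈ T, p ∣ k, ∏ p ∈ T, f p := by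
        simp only [sum_filter]
        exact sum_comm
    _ ≤ ∑ T ∈ (Nat.primesLE N).powerset, N * ∏ p ∈ T, f p / p := sum_le_sum fun T _ => hcount T
    _ = _ := by rw [← mul_sum, ← prod_one_add]

theorem sum_psi_le (N : ℕ) : ∑ k ∈ Icc 1 N, psi k ≤ Real.exp 6 * N := by
  rcases N.eq_zero_or_pos with rfl | hN
  · simp
  have hsum : ∑ p ∈ Nat.primesLE N, 6 / (p : ℝ) / p ≤ 6 :=
    calc _ ≤ ∑ p ∈ Ioc 1 N, 6 / (p : ℝ) / p := by
          refine sum_le_sum_of_subset_of_nonneg (fun p hp => ?_) fun _ _ _ => by positivity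
          obtain ⟨hpN, hp⟩ := Nat.mem_primesLE.1 hp
          exact mem_Ioc.2 ⟨hp.one_lt, hpN⟩
      _ = 6 * ∑ p ∈ Ioc 1 N, ((p : ℝ) ^ 2)⁻¹ := by
          rw [mul_sum]
          exact sum_congr rfl fun p _ => by rw [div_div, sq, div_eq_mul_inv]
      _ ≤ 6 * 1 := by
          have hsq := sum_Ioc_inv_sq_le_sub (α := ℝ) one_ne_zero hN
          have hinv : (0 : ℝ) ≤ (N : ℝ)⁻¹ := by positivity
          push_cast at hsq
          linarith
      _ = 6 := mul_one 6
  calc _ ≤ N * ∏ p ∈ Nat.primesLE N, (1 + 6 / (p : ℝ) / p) :=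
        sum_prod_primeFactors_one_add_le (fun _ => by positivity) N
    _ ≤ N * Real.exp (∑ p ∈ Nat.primesLE N, 6 / (p : ℝ) / p) := by
        rw [Real.exp_sum]
        gcongr with p
        rw [add_comm]
        exact Real.add_one_le_exp _
    _ ≤ N * Real.exp 6 := by gcongr
    _ = _ := mul_comm _ _

theorem sum_psi_dvd_le {H : ℝ} (hH : 0 ≤ H) {d : ℕ} (hd : 0 < d) :
    ∑ l ∈ Icc 1 ⌊H⌋₊ with d ∣ l, psi l ≤ Real.exp 6 * psi d * (H / d) := by
  have himage : {l ∈ Icc 1 ⌊H⌋₊ | d ∣ l} = (Icc 1 (⌊H⌋₊ / d)).image (d * ·) := by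
    ext l
    simp only [mem_filter, mem_Icc, mem_image, Nat.le_div_iff_mul_le hd]
    constructor
    · rintro ⟨⟨hl, hlH⟩, k, rfl⟩
      exact ⟨k, ⟨Nat.pos_of_mul_pos_left (a := d) (by omega), mul_comm d k ▸ hlH⟩, rfl⟩
    · rintro ⟨k, ⟨hk, hkH⟩, rfl⟩
      exact ⟨⟨Nat.mul_pos hd hk, mul_comm d k ▸ hkH⟩, dvd_mul_right d k⟩
  rw [himage, sum_image fun _ _ _ _ h => Nat.eq_of_mul_eq_mul_left hd h]
  have hψ := psi_pos d
  calc _ ≤ ∑ k ∈ Icc 1 (⌊H⌋₊ / d), psi d * psi k :=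
        sum_le_sum fun k hk => psi_mul_le hd.ne' (by have := (mem_Icc.1 hk).1; omega)
    _ = psi d * ∑ k ∈ Icc 1 (⌊H⌋₊ / d), psi k := (mul_sum _ _ _).symm
    _ ≤ psi d * (Real.exp 6 * (⌊H⌋₊ / d : ℕ)) := by gcongr; exact sum_psi_le _
    _ ≤ psi d * (Real.exp 6 * (H / d)) := by
        gcongr
        refine Nat.cast_div_le.trans ?_
        gcongr
        exact Nat.floor_le hH
    _ = _ := by ring

end Psi

section SieveBound

variable {X Y z : ℝ} {a b l : ℕ}

theorem card_siftedPairs_le (hX : 0 ≤ X) (hz : 2 ≤ z) (ha : 0 < a) (hb : 0 < b) (hl : 0 < l)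
    (habl : a.gcd b ∣ l) (hY : z ^ 222 * (a.lcm b : ℝ) ≤ Y) :
    (#(siftedPairs X Y z a b l) : ℝ) ≤
      10 * (Y / a.lcm b) * mertensProd z ^ 2 * psi a * psi b * psi l := by
  have hlcm : (0 : ℝ) < a.lcm b := Nat.cast_pos.2 (Nat.lcm_pos ha hb)
  have hY0 : 0 ≤ Y := le_trans (by positivity) hY
  have hψ : psi (2 * (a * b * l)) ≤ 4 * (psi a * psi b * psi l) :=
    calc _ ≤ psi 2 * psi (a * b * l) := psi_mul_le two_ne_zero (by positivity)
      _ ≤ psi 2 * (psi (a * b) * psi l) := by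
          gcongr
          · exact (psi_pos 2).le
          · exact psi_mul_le (by positivity) hl.ne'
      _ ≤ 4 * (psi a * psi b * psi l) := by
          rw [psi_two]
          gcongr
          · exact (psi_pos l).le
          · exact psi_mul_le ha.ne' hb.ne'
  have hψ1 : 1 ≤ psi a * psi b * psi l :=
    one_le_mul_of_one_le_of_one_le
      (one_le_mul_of_one_le_of_one_le (one_le_psi a) (one_le_psi b)) (one_le_psi l)
  have herror : z ^ 220 ≤ Y / a.lcm b * mertensProd z ^ 2 * (psi a * psi b * psi l) :=
    calc z ^ 220 = z ^ 222 * z⁻¹ ^ 2 * 1 := by field_simp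
      _ ≤ Y / a.lcm b * mertensProd z ^ 2 * (psi a * psi b * psi l) := by
          gcongr
          · exact (le_div_iff₀ hlcm).2 hY
          · exact inv_le_mertensProd (by linarith)
  calc (#(siftedPairs X Y z a b l) : ℝ) ≤ _ := card_siftedPairs_le_add hX hY0 hz ha hb habl
    _ ≤ 2 * (Y / a.lcm b) * (mertensProd z ^ 2 * psi (2 * (a * b * l))) + 2 * z ^ 220 := by
        gcongr
        exact prod_not_dvd_one_sub_two_div_le (by positivity) z
    _ ≤ 2 * (Y / a.lcm b) * (mertensProd z ^ 2 * (4 * (psi a * psi b * psi l))) +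
        2 * (Y / a.lcm b * mertensProd z ^ 2 * (psi a * psi b * psi l)) := by gcongr
    _ = _ := by ring

theorem siftedPairs_eq_empty (habl : ¬ a.gcd b ∣ l) : siftedPairs X Y z a b l = ∅ := by
  refine eq_empty_of_forall_notMem fun n hn => habl ?_
  obtain ⟨-, ⟨han, hbn⟩, -⟩ := mem_siftedPairs.1 hn
  exact (Nat.dvd_add_right ((Nat.gcd_dvd_left a b).trans han)).1 ((Nat.gcd_dvd_right a b).trans hbn)

theorem sum_card_siftedPairs_le {H : ℝ} (hX : 0 ≤ X) (hz : 2 ≤ z) (hH : 0 ≤ H) (ha : 0 < a)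
    (hb : 0 < b) (hY : z ^ 222 * (a * b) ≤ Y) :
    ∑ l ∈ Icc 1 ⌊H⌋₊, (#(siftedPairs X Y z a b l) : ℝ) ≤
      10 * Real.exp 6 * H * Y * mertensProd z ^ 2 * (psi a ^ 2 / a) * (psi b ^ 2 / b) := by
  set d := a.gcd b
  have hd : 0 < d := Nat.gcd_pos_of_pos_left b ha
  have hmul : (d : ℝ) * a.lcm b = a * b := by exact_mod_cast Nat.gcd_mul_lcm a b
  have hlcm : (0 : ℝ) < a.lcm b := Nat.cast_pos.2 (Nat.lcm_pos ha hb)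
  have hY0 : 0 ≤ Y := le_trans (by positivity) hY
  have hlcmY : z ^ 222 * (a.lcm b : ℝ) ≤ Y := by
    refine le_trans ?_ hY
    rw [← hmul]
    gcongr
    exact le_mul_of_one_le_left hlcm.le (Nat.one_le_cast.2 hd)
  have hψa := psi_pos a
  have hψb := psi_pos b
  have hψd : psi d ≤ psi a * psi b :=
    (psi_le_of_dvd ha.ne' (Nat.gcd_dvd_left a b)).trans
      (le_mul_of_one_le_right hψa.le (one_le_psi b))
  set K := 10 * (Y / a.lcm b) * mertensProd z ^ 2 * psi a * psi b with hK
  have hK0 : 0 ≤ K := by positivity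
  calc _ ≤ ∑ l ∈ Icc 1 ⌊H⌋₊ with d ∣ l, K * psi l := by
        rw [sum_filter]
        refine sum_le_sum fun l hl => ?_
        split_ifs with hdl
        · exact card_siftedPairs_le hX hz ha hb (mem_Icc.1 hl).1 hdl hlcmY
        · rw [siftedPairs_eq_empty hdl, card_empty, Nat.cast_zero]
    _ = K * ∑ l ∈ Icc 1 ⌊H⌋₊ with d ∣ l, psi l := (mul_sum _ _ _).symm
    _ ≤ K * (Real.exp 6 * (psi a * psi b) * (H / d)) := by
        refine mul_le_mul_of_nonneg_left ((sum_psi_dvd_le hH hd).trans ?_) hK0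
        gcongr
    _ = 10 * Real.exp 6 * H * Y * mertensProd z ^ 2 * (psi a ^ 2 * psi b ^ 2) /
        (d * a.lcm b) := by
        rw [hK]
        field_simp
    _ = _ := by
        rw [hmul]
        field_simp

end SieveBound

section Weights

/-- Shiu's class of multiplicative functions: nonnegative, at most `α ^ v` at prime powers `p ^ v`,
and at most `β * n ^ θ` everywhere. -/
structure ShiuClass (α β θ : ℝ) (g : ℕ → ℝ) : Prop where
  map_one : g 1 = 1
  map_mul : ∀ m n : ℕ, m.Coprime n → g (m * n) = g m * g n
  nonneg : ∀ n, 0 ≤ g n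
  prime_pow_le : ∀ p : ℕ, p.Prime → ∀ v : ℕ, 1 ≤ v → g (p ^ v) ≤ α ^ v
  le_mul_rpow : ∀ n : ℕ, 1 ≤ n → g n ≤ β * (n : ℝ) ^ θ

/-- The weight `g(a) ψ(a)² a^σ / a` carried by the smooth part `a` of an integer, Rankin's factor
`a^σ` included. -/
noncomputable def weight (g : ℕ → ℝ) (σ : ℝ) (a : ℕ) : ℝ := g a * (psi a ^ 2 / a) * (a : ℝ) ^ σ

/-- An upper bound for the excess of the local factor of `weight g σ` at `p` over `1 + g(p)/p`. -/
noncomputable def localExcess (α β σ : ℝ) (p : ℕ) : ℝ :=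
  (48 * β + 30 * α) * (p : ℝ) ^ (-(3 / 2) : ℝ) + α * (((p : ℝ) ^ σ - 1) / p)

variable {α β θ σ : ℝ} {g : ℕ → ℝ}

theorem ShiuClass.le_alpha (hg : ShiuClass α β θ g) {p : ℕ} (hp : p.Prime) : g p ≤ α := by
  simpa only [pow_one] using hg.prime_pow_le p hp 1 le_rfl

theorem ShiuClass.alpha_nonneg (hg : ShiuClass α β θ g) : 0 ≤ α :=
  (hg.nonneg 2).trans (hg.le_alpha Nat.prime_two)

theorem ShiuClass.one_le_beta (hg : ShiuClass α β θ g) : 1 ≤ β := by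
  simpa only [hg.map_one, Nat.cast_one, Real.one_rpow, mul_one] using hg.le_mul_rpow 1 le_rfl

theorem ShiuClass.mono {θ' : ℝ} (hθ : θ ≤ θ') (hg : ShiuClass α β θ g) : ShiuClass α β θ' g where
  __ := hg
  le_mul_rpow n hn := by
    have hn1 : (1 : ℝ) ≤ n := by exact_mod_cast hn
    have hβ := hg.one_le_beta
    exact (hg.le_mul_rpow n hn).trans (by gcongr)

theorem psi_one : psi 1 = 1 := by rw [psi, Nat.primeFactors_one, prod_empty]

theorem weight_nonneg (hg : ∀ n, 0 ≤ g n) (σ : ℝ) (a : ℕ) : 0 ≤ weight g σ a := by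
  have := hg a
  unfold weight
  positivity

theorem weight_one (hg : g 1 = 1) (σ : ℝ) : weight g σ 1 = 1 := by simp [weight, psi_one, hg]

theorem weight_mul (hg : ∀ m n : ℕ, m.Coprime n → g (m * n) = g m * g n) (σ : ℝ) {m n : ℕ}
    (h : m.Coprime n) : weight g σ (m * n) = weight g σ m * weight g σ n := by
  rw [weight, hg m n h, psi_mul h, Nat.cast_mul, Real.mul_rpow m.cast_nonneg n.cast_nonneg, weight,
    weight]
  ring

theorem psi_prime_pow_sq_le {p : ℕ} (hp : p.Prime) (v : ℕ) : psi (p ^ v) ^ 2 ≤ 16 := by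
  have hp2 : (2 : ℝ) ≤ p := by exact_mod_cast hp.two_le
  have hle : psi (p ^ v) ≤ 4 := by
    rcases eq_or_ne v 0 with rfl | hv
    · rw [pow_zero, psi_one]
      norm_num
    · rw [psi_prime_pow hp hv]
      linarith [(div_le_iff₀ (by linarith : (0 : ℝ) < p)).2 (by linarith : (6 : ℝ) ≤ 3 * p)]
  calc psi (p ^ v) ^ 2 ≤ 4 ^ 2 := pow_le_pow_left₀ (psi_pos _).le hle 2
    _ = 16 := by norm_num

theorem rpow_neg_three_quarters_le {p : ℝ} (hp : 2 ≤ p) : p ^ (-(3 / 4) : ℝ) ≤ 2 / 3 := by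
  refine (Real.rpow_le_rpow_of_nonpos two_pos hp (by norm_num)).trans
    (le_of_pow_le_pow_left₀ four_ne_zero (by norm_num) ?_)
  rw [← Real.rpow_natCast, ← Real.rpow_mul zero_le_two]
  norm_num

theorem weight_prime_pow_le (hg : ShiuClass α β θ g) (hθσ : θ + σ ≤ 1 / 4) {p : ℕ} (hp : p.Prime)
    (v : ℕ) : weight g σ (p ^ v) ≤ 16 * β * ((p : ℝ) ^ (-(3 / 4) : ℝ)) ^ v := by
  have hβ := hg.one_le_beta
  have hrpow : ((p : ℝ) ^ (-(3 / 4) : ℝ)) ^ v = ((p ^ v : ℕ) : ℝ) ^ (-(3 / 4) : ℝ) := by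
    rw [Nat.cast_pow, ← Real.rpow_natCast, ← Real.rpow_mul p.cast_nonneg, mul_comm,
      Real.rpow_mul p.cast_nonneg, Real.rpow_natCast]
  have hψ := psi_prime_pow_sq_le hp v
  have hn : 1 ≤ p ^ v := Nat.one_le_pow _ _ hp.pos
  rw [hrpow]
  generalize p ^ v = n at hn hψ
  have hn1 : (1 : ℝ) ≤ n := by exact_mod_cast hn
  calc g n * (psi n ^ 2 / n) * (n : ℝ) ^ σ ≤ β * (n : ℝ) ^ θ * (16 / n) * (n : ℝ) ^ σ := by
        gcongr
        exact hg.le_mul_rpow n hn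
    _ = 16 * β * (n : ℝ) ^ (θ + (-1) + σ) := by
        rw [Real.rpow_add (by linarith), Real.rpow_add (by linarith), Real.rpow_neg_one]
        ring
    _ ≤ _ := by
        gcongr
        linarith

theorem summable_weight_prime_pow (hg : ShiuClass α β θ g) (hθσ : θ + σ ≤ 1 / 4) {p : ℕ}
    (hp : p.Prime) : Summable fun v : ℕ => weight g σ (p ^ v) := by
  have hx := rpow_neg_three_quarters_le (Nat.ofNat_le_cast.2 hp.two_le)
  exact .of_nonneg_of_le (fun v => weight_nonneg hg.nonneg σ _) (weight_prime_pow_le hg hθσ hp)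
    ((summable_geometric_of_lt_one (by positivity) (by linarith)).mul_left _)

theorem weight_prime_le (hg : ShiuClass α β θ g) (hσ0 : 0 ≤ σ) (hσ : σ ≤ 1 / 2) {p : ℕ}
    (hp : p.Prime) : weight g σ p ≤
      g p / p + (30 * α * (p : ℝ) ^ (-(3 / 2) : ℝ) + α * (((p : ℝ) ^ σ - 1) / p)) := by
  have hp2 : (2 : ℝ) ≤ p := by exact_mod_cast hp.two_le
  have hp0 : (0 : ℝ) < p := by linarith
  have hα := hg.alpha_nonneg
  have hgp := hg.le_alpha hp
  have hg0 := hg.nonneg p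
  have hψ : psi p ^ 2 ≤ 1 + 30 / p := by
    have hψp : psi p = 1 + 6 / (p : ℝ) := by simpa only [pow_one] using psi_prime_pow hp one_ne_zero
    have : 36 / (p : ℝ) / p ≤ 18 / p := by
      gcongr
      rw [div_le_iff₀ hp0]
      linarith
    calc psi p ^ 2 = 1 + 12 / p + 36 / p / p := by
          rw [hψp]
          ring
      _ ≤ 1 + 12 / p + 18 / p := by gcongr
      _ = 1 + 30 / p := by ring
  have hrpow : (p : ℝ) ^ σ / p / p ≤ (p : ℝ) ^ (-(3 / 2) : ℝ) := by
    rw [div_div, ← sq, ← Real.rpow_two, ← Real.rpow_sub hp0]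
    exact Real.rpow_le_rpow_of_exponent_le (by linarith) (by linarith)
  have hone : 0 ≤ ((p : ℝ) ^ σ - 1) / p :=
    div_nonneg (sub_nonneg.2 (Real.one_le_rpow (by linarith) hσ0)) hp0.le
  calc g p * (psi p ^ 2 / p) * (p : ℝ) ^ σ ≤ g p * ((1 + 30 / p) / p) * (p : ℝ) ^ σ := by gcongr
    _ = g p / p + (30 * g p * ((p : ℝ) ^ σ / p / p) + g p * (((p : ℝ) ^ σ - 1) / p)) := by
        field_simp
        ring
    _ ≤ _ := by gcongr

theorem tsum_weight_prime_pow_add_two_le (hg : ShiuClass α β θ g) (hθσ : θ + σ ≤ 1 / 4) {p : ℕ}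
    (hp : p.Prime) :
    ∑' v : ℕ, weight g σ (p ^ (v + 2)) ≤ 48 * β * (p : ℝ) ^ (-(3 / 2) : ℝ) := by
  have hβ := hg.one_le_beta
  have hx := rpow_neg_three_quarters_le (Nat.ofNat_le_cast.2 hp.two_le)
  have hx2 : ((p : ℝ) ^ (-(3 / 4) : ℝ)) ^ 2 = (p : ℝ) ^ (-(3 / 2) : ℝ) := by
    rw [← Real.rpow_natCast, ← Real.rpow_mul p.cast_nonneg]
    norm_num
  have hx0 : 0 ≤ (p : ℝ) ^ (-(3 / 4) : ℝ) := by positivity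
  rw [← hx2]
  have hle := weight_prime_pow_le hg hθσ hp
  generalize (p : ℝ) ^ (-(3 / 4) : ℝ) = x at hx hx0 hle
  have hgeom := (hasSum_geometric_of_lt_one hx0 (by linarith)).mul_left (16 * β * x ^ 2)
  calc _ ≤ ∑' v : ℕ, 16 * β * x ^ 2 * x ^ v :=
        ((summable_nat_add_iff 2).2 (summable_weight_prime_pow hg hθσ hp)).tsum_le_tsum
          (fun v => (hle (v + 2)).trans_eq (by ring)) hgeom.summable
    _ = 16 * β * x ^ 2 * (1 - x)⁻¹ := hgeom.tsum_eq
    _ ≤ 16 * β * x ^ 2 * 3 := by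
        gcongr
        rw [inv_le_comm₀ (by linarith) three_pos]
        linarith
    _ = 48 * β * x ^ 2 := by ring

theorem tsum_weight_prime_pow_le (hg : ShiuClass α β θ g) (hσ0 : 0 ≤ σ) (hσ : σ ≤ 1 / 2)
    (hθσ : θ + σ ≤ 1 / 4) {p : ℕ} (hp : p.Prime) :
    ∑' v : ℕ, weight g σ (p ^ v) ≤ 1 + g p / p + localExcess α β σ p := by
  rw [← (summable_weight_prime_pow hg hθσ hp).sum_add_tsum_nat_add 2, sum_range_succ,
    sum_range_one, pow_zero, pow_one, weight_one hg.map_one, localExcess]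
  linarith [weight_prime_le hg hσ0 hσ hp, tsum_weight_prime_pow_add_two_le hg hθσ hp]

theorem sum_weight_le_prod (hg : ShiuClass α β θ g) (hσ0 : 0 ≤ σ) (hσ : σ ≤ 1 / 2)
    (hθσ : θ + σ ≤ 1 / 4) {N : ℕ} {A : Finset ℕ} (hA : ∀ a ∈ A, a ∈ N.smoothNumbers) :
    ∑ a ∈ A, weight g σ a ≤ ∏ p ∈ N.primesBelow, (1 + g p / p + localExcess α β σ p) := by
  have heuler := EulerProduct.summable_and_hasSum_smoothNumbers_prod_primesBelow_tsum
    (weight_one hg.map_one σ) (weight_mul hg.map_mul σ)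
    (fun hp => (summable_weight_prime_pow hg hθσ hp).norm) N
  calc ∑ a ∈ A, weight g σ a = ∑ a ∈ A.subtype (· ∈ N.smoothNumbers), weight g σ a :=
        (sum_subtype_of_mem _ hA).symm
    _ ≤ ∏ p ∈ N.primesBelow, ∑' v : ℕ, weight g σ (p ^ v) :=
        sum_le_hasSum _ (fun a _ => weight_nonneg hg.nonneg σ a) heuler.2
    _ ≤ _ := prod_le_prod (fun p _ => tsum_nonneg fun v => weight_nonneg hg.nonneg σ _)
        fun p hp => tsum_weight_prime_pow_le hg hσ0 hσ hθσ (Nat.prime_of_mem_primesBelow hp)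

end Weights

section EulerProducts

/-- The Euler product `∏_{p ≤ X} (1 + (g(p) - 1)/p)` of the theorem. -/
noncomputable def shiuProd (g : ℕ → ℝ) (X : ℝ) : ℝ :=
  ∏ p ∈ (Icc 1 ⌊X⌋₊).filter Nat.Prime, (1 + (g p - 1) / (p : ℝ))

/-- An upper bound for `∑_{p < y} localExcess α β (K / log y) p`, uniform in `y`. -/
noncomputable def excessBound (α β K : ℝ) : ℝ :=
  (48 * β + 30 * α) * (∑' n : ℕ, (n : ℝ) ^ (-(3 / 2) : ℝ)) + α * (3 * K * Real.exp K)

variable {α β θ σ : ℝ} {g : ℕ → ℝ}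

theorem localExcess_nonneg (hα : 0 ≤ α) (hβ : 0 ≤ β) (hσ : 0 ≤ σ) {p : ℕ} (hp : p.Prime) :
    0 ≤ localExcess α β σ p := by
  have hp1 : (1 : ℝ) ≤ p := by exact_mod_cast hp.one_lt.le
  have : 0 ≤ ((p : ℝ) ^ σ - 1) / p :=
    div_nonneg (sub_nonneg.2 (Real.one_le_rpow hp1 hσ)) (by linarith)
  unfold localExcess
  positivity

theorem exp_sub_one_le {t K : ℝ} (ht : 0 ≤ t) (htK : t ≤ K) :
    Real.exp t - 1 ≤ t * Real.exp K := by
  have hneg := mul_le_mul_of_nonneg_right (Real.add_one_le_exp (-t)) (Real.exp_pos t).le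
  rw [← Real.exp_add, neg_add_cancel, Real.exp_zero] at hneg
  calc Real.exp t - 1 ≤ t * Real.exp t := by linarith
    _ ≤ t * Real.exp K := by gcongr

theorem sum_rpow_sub_one_div_le {K y : ℝ} (hK : 0 ≤ K) (hy : 2 ≤ y) :
    ∑ p ∈ primesLT y, ((p : ℝ) ^ (K / Real.log y) - 1) / p ≤ 3 * K * Real.exp K := by
  have hly : 0 < Real.log y := Real.log_pos (by linarith)
  have hterm : ∀ p ∈ primesLT y, ((p : ℝ) ^ (K / Real.log y) - 1) / p ≤
      K / Real.log y * Real.exp K * (Real.log p / p) := by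
    intro p hp
    obtain ⟨hp, hpy⟩ := mem_primesLT.1 hp
    have hp1 : (1 : ℝ) < p := by exact_mod_cast hp.one_lt
    have hlp : 0 < Real.log p := Real.log_pos hp1
    have hlpy : Real.log p ≤ Real.log y := Real.log_le_log (by linarith) hpy.le
    rw [← mul_div_assoc _ _ (p : ℝ), Real.rpow_def_of_pos (by linarith)]
    gcongr
    refine (exp_sub_one_le (K := K) (by positivity) ?_).trans_eq (by ring)
    rw [← mul_div_assoc, div_le_iff₀ hly, mul_comm]
    gcongr
  calc _ ≤ ∑ p ∈ primesLT y, K / Real.log y * Real.exp K * (Real.log p / p) := sum_le_sum hterm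
    _ = K / Real.log y * Real.exp K * ∑ p ∈ primesLT y, Real.log p / p := (mul_sum ..).symm
    _ ≤ K / Real.log y * Real.exp K * (3 * Real.log y) := by
        gcongr
        exact sum_log_div_le hy fun p hp => ⟨(mem_primesLT.1 hp).1, (mem_primesLT.1 hp).2.le⟩
    _ = 3 * K * Real.exp K := by field_simp

theorem sum_localExcess_le {K y : ℝ} (hα : 0 ≤ α) (hβ : 0 ≤ β) (hK : 0 ≤ K) (hy : 2 ≤ y) :
    ∑ p ∈ primesLT y, localExcess α β (K / Real.log y) p ≤ excessBound α β K := by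
  simp only [localExcess, excessBound]
  rw [sum_add_distrib, ← mul_sum, ← mul_sum]
  gcongr
  · exact (Real.summable_nat_rpow.2 (by norm_num)).sum_le_tsum _ fun n _ => by positivity
  · exact sum_rpow_sub_one_div_le hK hy

theorem half_le_eulerFactor (hg : ∀ n, 0 ≤ g n) {p : ℕ} (hp : p.Prime) :
    1 / 2 ≤ 1 + (g p - 1) / (p : ℝ) := by
  have hp2 : (2 : ℝ) ≤ p := by exact_mod_cast hp.two_le
  have hinv : 1 / (p : ℝ) ≤ 1 / 2 := by gcongr
  have hgp : 0 ≤ g p / p := div_nonneg (hg p) (by linarith)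
  rw [sub_div]
  linarith

theorem shiuProd_pos (hg : ∀ n, 0 ≤ g n) (X : ℝ) : 0 < shiuProd g X :=
  prod_pos fun _ hp => one_half_pos.trans_le (half_le_eulerFactor hg (mem_filter.1 hp).2)

theorem primesLT_eq_filter {z X : ℝ} (hzX : z ≤ X) :
    primesLT z = {p ∈ (Icc 1 ⌊X⌋₊).filter Nat.Prime | ((p : ℕ) : ℝ) < z} := by
  ext p
  simp only [mem_primesLT, mem_filter, mem_Icc]
  refine ⟨fun ⟨hp, hpz⟩ => ⟨⟨⟨hp.one_lt.le, Nat.le_floor (hpz.le.trans hzX)⟩, hp⟩, hpz⟩,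
    fun ⟨⟨_, hp⟩, hpz⟩ => ⟨hp, hpz⟩⟩

theorem ite_mul_ite_le_exp_mul {x G η : ℝ} (hx0 : 0 ≤ x) (hx : x ≤ 1 / 2) (hG : 0 ≤ G)
    (hη : 0 ≤ η) {p y z : ℝ} (hzy : z ≤ y) :
    (if p < z then 1 - x else 1) * (if p < y then 1 + G + η else 1) ≤
      Real.exp (2 * (if p < y then η else 0) + 2 * (if z ≤ p then x else 0)) * (1 + (G - x)) := by
  have hη' : η ≤ 2 * η * (1 + (G - x)) := by nlinarith
  have hx' : x ≤ 2 * x * (1 + (G - x)) := by nlinarith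
  refine le_trans ?_ (mul_le_mul_of_nonneg_right (Real.add_one_le_exp _) (by linarith))
  rcases lt_or_ge p z with hpz | hpz
  · rw [if_pos hpz, if_pos (hpz.trans_le hzy), if_pos (hpz.trans_le hzy), if_neg hpz.not_ge]
    nlinarith [mul_nonneg hη hx0, mul_nonneg hG hx0]
  · rw [if_neg hpz.not_gt, if_pos hpz]
    split_ifs <;> linarith

theorem mertensProd_mul_prod_le {η : ℕ → ℝ} (hg : ∀ n, 0 ≤ g n)
    (hη : ∀ p : ℕ, p.Prime → 0 ≤ η p) {X y z : ℝ} (hz : 1 < z) (hzy : z ≤ y) (hyX : y ≤ X)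
    (hX : 2 ≤ X) :
    mertensProd z * ∏ p ∈ primesLT y, (1 + g p / p + η p) ≤
      Real.exp (2 * (∑ p ∈ primesLT y, η p) + 6 * Real.log X / Real.log z) * shiuProd g X := by
  set Q := (Icc 1 ⌊X⌋₊).filter Nat.Prime
  have hsum : ∑ p ∈ Q with z ≤ ((p : ℕ) : ℝ), 1 / (p : ℝ) ≤ 3 * Real.log X / Real.log z := by
    refine sum_inv_le hz hX fun p hp => ?_
    obtain ⟨hpQ, hzp⟩ := mem_filter.1 hp
    obtain ⟨hpX, hp⟩ := mem_filter.1 hpQ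
    exact ⟨hp, hzp, (Nat.le_floor_iff (by linarith)).1 (mem_Icc.1 hpX).2⟩
  calc mertensProd z * ∏ p ∈ primesLT y, (1 + g p / p + η p)
      = ∏ p ∈ Q, (if (p : ℝ) < z then 1 - 1 / (p : ℝ) else 1) *
          (if (p : ℝ) < y then 1 + g p / p + η p else 1) := by
        rw [prod_mul_distrib, ← prod_filter, ← prod_filter, ← primesLT_eq_filter hyX,
          ← primesLT_eq_filter (hzy.trans hyX), mertensProd]
    _ ≤ ∏ p ∈ Q, Real.exp (2 * (if (p : ℝ) < y then η p else 0) +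
          2 * (if z ≤ (p : ℝ) then 1 / (p : ℝ) else 0)) * (1 + (g p - 1) / (p : ℝ)) := by
        refine prod_le_prod (fun p hp => ?_) fun p hp => ?_ <;>
        have hp := (mem_filter.1 hp).2 <;>
        have hp2 : (2 : ℝ) ≤ p := Nat.ofNat_le_cast.2 hp.two_le <;>
        have hinv : 1 / (p : ℝ) ≤ 1 / 2 := one_div_le_one_div_of_le two_pos hp2 <;>
        have hgp : 0 ≤ g p / p := div_nonneg (hg p) (by linarith) <;>
        have hηp := hη p hp
        · refine mul_nonneg ?_ ?_ <;> split_ifs <;> linarith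
        · rw [sub_div]
          exact ite_mul_ite_le_exp_mul (by positivity) hinv hgp hηp hzy
    _ = Real.exp (2 * (∑ p ∈ primesLT y, η p) +
          2 * ∑ p ∈ Q with z ≤ ((p : ℕ) : ℝ), 1 / (p : ℝ)) * shiuProd g X := by
        rw [prod_mul_distrib, ← Real.exp_sum, sum_add_distrib, ← mul_sum, ← mul_sum,
          ← sum_filter, ← sum_filter, ← primesLT_eq_filter hyX, shiuProd]
    _ ≤ _ := by
        have := (shiuProd_pos hg X).le
        gcongr
        linarith [mul_div_assoc 3 (Real.log X) (Real.log z),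
          mul_div_assoc 6 (Real.log X) (Real.log z)]

theorem mertensProd_mul_sum_weight_le (hg : ShiuClass α β θ g) (hθ : θ ≤ 1 / 8) {K X y z : ℝ}
    (hK : 0 ≤ K) (hKy : 8 * K ≤ Real.log y) (hz : 1 < z) (hzy : z ≤ y) (hyX : y ≤ X) (hy : 2 ≤ y)
    {A : Finset ℕ} (hA : ∀ a ∈ A, a ∈ Nat.smoothNumbers ⌈y⌉₊) :
    mertensProd z * ∑ a ∈ A, weight g (K / Real.log y) a ≤
      Real.exp (2 * excessBound α β K) * Real.exp (6 * Real.log X / Real.log z) *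
        shiuProd g X := by
  have hα := hg.alpha_nonneg
  have hβ : 0 ≤ β := zero_le_one.trans hg.one_le_beta
  have hly : 0 < Real.log y := Real.log_pos (by linarith)
  have hσ0 : 0 ≤ K / Real.log y := by positivity
  have hσ : K / Real.log y ≤ 1 / 8 := by
    rw [div_le_iff₀ hly]
    linarith
  calc _ ≤ mertensProd z *
        ∏ p ∈ primesLT y, (1 + g p / p + localExcess α β (K / Real.log y) p) :=
        mul_le_mul_of_nonneg_left
          (sum_weight_le_prod hg hσ0 (by linarith) (by linarith) hA) (mertensProd_pos z).le
    _ ≤ Real.exp (2 * (∑ p ∈ primesLT y, localExcess α β (K / Real.log y) p) +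
          6 * Real.log X / Real.log z) * shiuProd g X :=
        mertensProd_mul_prod_le hg.nonneg (fun p hp => localExcess_nonneg hα hβ hσ0 hp) hz hzy hyX
          (hy.trans hyX)
    _ ≤ _ := by
        rw [← Real.exp_add]
        have := (shiuProd_pos hg.nonneg X).le
        gcongr
        exact sum_localExcess_le hα hβ hK hy

end EulerProducts

section SmoothPart

/-- The largest divisor of `n` composed of primes below `w`. -/
def smoothPart (w n : ℕ) : ℕ := ∏ p ∈ w.primesBelow, p ^ n.factorization p

variable {n w q : ℕ}

theorem smoothPart_zero (n : ℕ) : smoothPart 0 n = 1 := by simp [smoothPart]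

theorem smoothPart_succ_of_prime (hq : q.Prime) (n : ℕ) :
    smoothPart (q + 1) n = smoothPart q n * q ^ n.factorization q := by
  rw [smoothPart, Nat.primesBelow_succ, if_pos hq, prod_insert (Nat.notMem_primesBelow q), mul_comm,
    smoothPart]

theorem smoothPart_succ_of_not_prime (hq : ¬ q.Prime) (n : ℕ) :
    smoothPart (q + 1) n = smoothPart q n := by
  rw [smoothPart, Nat.primesBelow_succ, if_neg hq, smoothPart]

theorem smoothPart_dvd (w n : ℕ) : smoothPart w n ∣ n := by
  refine prod_dvd_of_isRelPrime (fun p hp q hq hpq => ?_) fun p _ => Nat.ordProj_dvd n p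
  exact Nat.coprime_iff_isRelPrime.1 (Nat.Coprime.pow _ _ ((Nat.coprime_primes
    (Nat.prime_of_mem_primesBelow hp) (Nat.prime_of_mem_primesBelow hq)).2 hpq))

theorem smoothPart_pos (w n : ℕ) : 0 < smoothPart w n :=
  prod_pos fun _ hp => pow_pos (Nat.prime_of_mem_primesBelow hp).pos _

theorem smoothPart_mem_smoothNumbers (w n : ℕ) : smoothPart w n ∈ w.smoothNumbers := by
  refine Nat.mem_smoothNumbers'.2 fun p hp hdvd => ?_
  obtain ⟨q, hq, hpq⟩ := (hp.prime.dvd_finsetProd_iff _).1 hdvd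
  rw [(Nat.prime_dvd_prime_iff_eq hp (Nat.prime_of_mem_primesBelow hq)).1 (hp.dvd_of_dvd_pow hpq)]
  exact Nat.lt_of_mem_primesBelow hq

theorem isRough_div_smoothPart (hn : n ≠ 0) : IsRough w (n / smoothPart w n) := by
  refine fun p hp hdvd => Nat.cast_le.2 <| le_of_not_gt fun hpw => ?_
  have hpow : p ^ n.factorization p ∣ smoothPart w n :=
    dvd_prod_of_mem (fun p => p ^ n.factorization p) (Nat.mem_primesBelow.2 ⟨hpw, hp⟩)
  refine Nat.pow_succ_factorization_not_dvd hn hp ?_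
  rw [pow_succ]
  exact (mul_dvd_mul hpow hdvd).trans (Nat.mul_div_cancel' (smoothPart_dvd w n)).dvd

theorem coprime_smoothPart_div (hn : n ≠ 0) : (smoothPart w n).Coprime (n / smoothPart w n) :=
  Nat.coprime_of_dvd fun p hp hsmooth hrough =>
    (Nat.mem_smoothNumbers'.1 (smoothPart_mem_smoothNumbers w n) p hp hsmooth).not_ge
      (Nat.cast_le.1 (isRough_div_smoothPart hn p hp hrough))

end SmoothPart

section RoughBound

variable {α β θ z : ℝ} {g : ℕ → ℝ} {m k : ℕ}

theorem IsRough.mono {w : ℝ} (hzw : z ≤ w) (hm : IsRough w m) : IsRough z m :=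
  fun p hp hdvd => hzw.trans (hm p hp hdvd)

theorem ShiuClass.le_pow_length (hg : ShiuClass α β θ g) (hm : m ≠ 0) :
    g m ≤ α ^ m.primeFactorsList.length := by
  induction m using Nat.recOnPosPrimePosCoprime with
  | zero => exact absurd rfl hm
  | one => simp [hg.map_one]
  | prime_pow p v hp hv =>
    rw [hp.primeFactorsList_pow, List.length_replicate]
    exact hg.prime_pow_le p hp v hv
  | coprime a b ha hb hab iha ihb =>
    rw [hg.map_mul a b hab, (Nat.perm_primeFactorsList_mul_of_coprime hab).length_eq,
      List.length_append, pow_add]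
    exact mul_le_mul (iha (by lia)) (ihb (by lia)) (hg.nonneg b) (pow_nonneg hg.alpha_nonneg _)

theorem IsRough.pow_length_le (hz : 0 ≤ z) (hm : m ≠ 0) (hrough : IsRough z m) :
    z ^ m.primeFactorsList.length ≤ m := by
  have hceil : ⌈z⌉₊ ^ m.primeFactorsList.length ≤ m := by
    conv_rhs => rw [← Nat.prod_primeFactorsList hm]
    exact List.pow_card_le_prod _ _ fun p hp => Nat.ceil_le.2
      (hrough p (Nat.prime_of_mem_primeFactorsList hp) (Nat.dvd_of_mem_primeFactorsList hp))
  calc z ^ m.primeFactorsList.length ≤ (⌈z⌉₊ : ℝ) ^ m.primeFactorsList.length :=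
        pow_le_pow_left₀ hz (Nat.le_ceil z) _
    _ ≤ m := by exact_mod_cast hceil

theorem ShiuClass.le_pow_of_isRough (hg : ShiuClass α β θ g) (hα : 1 ≤ α) (hz : 1 < z)
    (hm : m ≠ 0) (hrough : IsRough z m) (hk : (m : ℝ) ≤ z ^ k) : g m ≤ α ^ k :=
  (hg.le_pow_length hm).trans <| pow_le_pow_right₀ hα <|
    (pow_le_pow_iff_right₀ hz).1 ((hrough.pow_length_le (by linarith) hm).trans hk)

theorem ShiuClass.le_smoothPart_mul_pow (hg : ShiuClass α β θ g) (hα : 1 ≤ α) (hz : 1 < z) {w : ℕ}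
    (hzw : z ≤ w) (hm : m ≠ 0) (hk : (m : ℝ) ≤ z ^ k) : g m ≤ g (smoothPart w m) * α ^ k := by
  have hdvd := smoothPart_dvd w m
  have hquot : g (m / smoothPart w m) ≤ α ^ k :=
    hg.le_pow_of_isRough hα hz (Nat.div_pos (Nat.le_of_dvd (Nat.pos_of_ne_zero hm) hdvd)
      (smoothPart_pos w m)).ne' ((isRough_div_smoothPart hm).mono hzw)
      ((Nat.cast_le.2 (Nat.div_le_self m _)).trans hk)
  calc g m = g (smoothPart w m * (m / smoothPart w m)) := by rw [Nat.mul_div_cancel' hdvd]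
    _ = g (smoothPart w m) * g (m / smoothPart w m) := hg.map_mul _ _ (coprime_smoothPart_div hm)
    _ ≤ g (smoothPart w m) * α ^ k := mul_le_mul_of_nonneg_left hquot (hg.nonneg _)

end RoughBound

section ConvSum

open Classical in
/-- The shifted convolution sum of `g` over the pairs `(l, n)` with `E l n`. -/
noncomputable def convSum (g : ℕ → ℝ) (X Y H : ℝ) (E : ℕ → ℕ → Prop) : ℝ :=
  ∑ l ∈ Icc 1 ⌊H⌋₊, ∑ n ∈ shortInterval X Y with E l n, g n * g (n + l)

variable {ι : Type*} {g : ℕ → ℝ} {X Y H : ℝ} {E : ℕ → ℕ → Prop}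

theorem convSum_true (g : ℕ → ℝ) (X Y H : ℝ) :
    convSum g X Y H (fun _ _ => True) =
      ∑ l ∈ Icc 1 ⌊H⌋₊, ∑ n ∈ shortInterval X Y, g n * g (n + l) := by
  simp only [convSum, filter_true]

theorem convSum_le_sum_mul_card (s : Finset ι) {c : ι → ℝ} (hc : ∀ i ∈ s, 0 ≤ c i)
    (T : ι → ℕ → Finset ℕ)
    (hE : ∀ l ∈ Icc 1 ⌊H⌋₊, ∀ n ∈ shortInterval X Y, E l n →
      ∃ i ∈ s, n ∈ T i l ∧ g n * g (n + l) ≤ c i) :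
    convSum g X Y H E ≤ ∑ i ∈ s, c i * ∑ l ∈ Icc 1 ⌊H⌋₊, (#(T i l) : ℝ) := by
  classical
  simp only [mul_sum]
  rw [sum_comm]
  refine sum_le_sum fun l hl => ?_
  calc _ ≤ ∑ n ∈ shortInterval X Y with E l n, ∑ i ∈ s, if n ∈ T i l then c i else 0 := by
        refine sum_le_sum fun n hn => ?_
        obtain ⟨hn, hEn⟩ := mem_filter.1 hn
        obtain ⟨i, hi, hnT, hle⟩ := hE l hl n hn hEn
        calc g n * g (n + l) ≤ if n ∈ T i l then c i else 0 := by rwa [if_pos hnT]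
          _ ≤ _ := single_le_sum (f := fun i => if n ∈ T i l then c i else 0)
            (fun i hi => ite_nonneg (hc i hi) le_rfl) hi
    _ ≤ ∑ i ∈ s, c i * #(T i l) := by
        rw [sum_comm]
        refine sum_le_sum fun i hi => ?_
        rw [← sum_filter, sum_const, nsmul_eq_mul, mul_comm]
        exact mul_le_mul_of_nonneg_left (Nat.cast_le.2 (card_le_card fun n hn =>
          (mem_filter.1 hn).2)) (hc i hi)

theorem convSum_le_sum (hg : ∀ n, 0 ≤ g n) (s : Finset ι) (F : ι → ℕ → ℕ → Prop)
    (hE : ∀ l ∈ Icc 1 ⌊H⌋₊, ∀ n ∈ shortInterval X Y, E l n → ∃ i ∈ s, F i l n) :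
    convSum g X Y H E ≤ ∑ i ∈ s, convSum g X Y H (F i) := by
  classical
  have hterm (l n : ℕ) : 0 ≤ g n * g (n + l) := mul_nonneg (hg n) (hg _)
  simp only [convSum, sum_filter]
  rw [sum_comm (s := s)]
  refine sum_le_sum fun l hl => ?_
  rw [sum_comm (s := s)]
  refine sum_le_sum fun n hn => ?_
  have hite (i : ι) : 0 ≤ if F i l n then g n * g (n + l) else 0 := ite_nonneg (hterm l n) le_rfl
  split_ifs with hEn
  · obtain ⟨i, hi, hF⟩ := hE l hl n hn hEn
    calc g n * g (n + l) = if F i l n then g n * g (n + l) else 0 := (if_pos hF).symm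
      _ ≤ _ := single_le_sum (f := fun i => if F i l n then g n * g (n + l) else 0)
        (fun i _ => hite i) hi
  · exact sum_nonneg fun i _ => hite i

end ConvSum

section SplitBound

/-- For some threshold `w` between `z` and `y`, the product of the `w`-smooth parts of `m` and `n`
lies in `[L, U]`. -/
def SplitsBetween (z y L U : ℝ) (m n : ℕ) : Prop :=
  ∃ w : ℕ, (z ≤ w ∧ w ≤ ⌈y⌉₊) ∧ L ≤ (smoothPart w m * smoothPart w n : ℕ) ∧
    ((smoothPart w m * smoothPart w n : ℕ) : ℝ) ≤ U

/-- The pairs of `⌈y⌉₊`-smooth numbers with product in `[L, U]`, the possible pairs of smooth parts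
in `SplitsBetween`. -/
noncomputable def smoothPairs (y L U : ℝ) : Finset (ℕ × ℕ) :=
  {c ∈ Nat.smoothNumbersUpTo ⌊U⌋₊ ⌈y⌉₊ ×ˢ Nat.smoothNumbersUpTo ⌊U⌋₊ ⌈y⌉₊ |
    L ≤ ((c.1 * c.2 : ℕ) : ℝ) ∧ ((c.1 * c.2 : ℕ) : ℝ) ≤ U}

variable {α β θ z y L U X Y H K σ : ℝ} {g : ℕ → ℝ} {k : ℕ}

theorem smoothPart_mem_smoothPairs {w m n : ℕ} (hw : w ≤ ⌈y⌉₊)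
    (hL : L ≤ (smoothPart w m * smoothPart w n : ℕ))
    (hU : ((smoothPart w m * smoothPart w n : ℕ) : ℝ) ≤ U) :
    (smoothPart w m, smoothPart w n) ∈ smoothPairs y L U := by
  have hle := Nat.le_floor hU
  refine mem_filter.2 ⟨mem_product.2 ⟨Nat.mem_smoothNumbersUpTo.2 ⟨?_, ?_⟩,
    Nat.mem_smoothNumbersUpTo.2 ⟨?_, ?_⟩⟩, hL, hU⟩
  · exact (Nat.le_mul_of_pos_right _ (smoothPart_pos w n)).trans hle
  · exact Nat.smoothNumbers_mono hw (smoothPart_mem_smoothNumbers w m)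
  · exact (Nat.le_mul_of_pos_left _ (smoothPart_pos w m)).trans hle
  · exact Nat.smoothNumbers_mono hw (smoothPart_mem_smoothNumbers w n)

theorem sum_smoothPairs_mul_le {f : ℕ → ℝ} (hf : ∀ a, 0 ≤ f a) :
    ∑ p ∈ smoothPairs y L U, f p.1 * f p.2 ≤
      (∑ a ∈ Nat.smoothNumbersUpTo ⌊U⌋₊ ⌈y⌉₊, f a) ^ 2 := by
  rw [sq, sum_mul_sum, ← sum_product']
  exact sum_le_sum_of_subset_of_nonneg (filter_subset _ _) fun p _ _ => mul_nonneg (hf _) (hf _)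

theorem smoothPart_mem_siftedPairs {w l n : ℕ} (hzw : z ≤ w) (hn : n ∈ shortInterval X Y)
    (hn0 : n ≠ 0) : n ∈ siftedPairs X Y z (smoothPart w n) (smoothPart w (n + l)) l :=
  mem_siftedPairs.2 ⟨hn, ⟨smoothPart_dvd w n, smoothPart_dvd w (n + l)⟩,
    (isRough_div_smoothPart hn0).mono hzw, (isRough_div_smoothPart (by lia)).mono hzw⟩

theorem mul_le_rankin (hg : ShiuClass α β θ g) (hα : 1 ≤ α) (hz : 1 < z) (hL : 0 < L)
    (hσ : 0 ≤ σ) {w m n : ℕ} (hzw : z ≤ w) (hm : m ≠ 0) (hn : n ≠ 0) (hmk : (m : ℝ) ≤ z ^ k)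
    (hnk : (n : ℝ) ≤ z ^ k) (hLmn : L ≤ (smoothPart w m * smoothPart w n : ℕ)) :
    g m * g n ≤ α ^ (2 * k) * L ^ (-σ) *
      ((g (smoothPart w m) * (smoothPart w m : ℝ) ^ σ) *
        (g (smoothPart w n) * (smoothPart w n : ℝ) ^ σ)) := by
  have hrankin : 1 ≤ L ^ (-σ) * ((smoothPart w m : ℝ) ^ σ * (smoothPart w n : ℝ) ^ σ) := by
    rw [← Real.mul_rpow (Nat.cast_nonneg _) (Nat.cast_nonneg _), Real.rpow_neg hL.le,
      ← div_eq_inv_mul, one_le_div (by positivity)]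
    exact Real.rpow_le_rpow hL.le (by exact_mod_cast hLmn) hσ
  have hg0 := mul_nonneg (hg.nonneg (smoothPart w m)) (hg.nonneg (smoothPart w n))
  calc g m * g n ≤ (g (smoothPart w m) * α ^ k) * (g (smoothPart w n) * α ^ k) :=
        mul_le_mul (hg.le_smoothPart_mul_pow hα hz hzw hm hmk)
          (hg.le_smoothPart_mul_pow hα hz hzw hn hnk) (hg.nonneg n)
          (mul_nonneg (hg.nonneg _) (by positivity))
    _ = α ^ (2 * k) * (g (smoothPart w m) * g (smoothPart w n)) * 1 := by ring
    _ ≤ α ^ (2 * k) * (g (smoothPart w m) * g (smoothPart w n)) *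
          (L ^ (-σ) * ((smoothPart w m : ℝ) ^ σ * (smoothPart w n : ℝ) ^ σ)) := by gcongr
    _ = _ := by ring

theorem convSum_splitsBetween_le_sum_weight (hα : 1 ≤ α) (hg : ShiuClass α β θ g) (hσ : 0 ≤ σ)
    (hX : 0 < X) (hY : 0 ≤ Y) (hYX : Y ≤ X) (hH : 0 ≤ H) (hHX : H ≤ X) (hz : 2 ≤ z) (hL : 0 < L)
    (hk : 3 * X ≤ z ^ k) (hU : z ^ 222 * U ≤ Y) :
    convSum g X Y H (fun l n => SplitsBetween z y L U n (n + l)) ≤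
      10 * Real.exp 6 * α ^ (2 * k) * L ^ (-σ) * (H * Y) *
        (mertensProd z * ∑ a ∈ Nat.smoothNumbersUpTo ⌊U⌋₊ ⌈y⌉₊, weight g σ a) ^ 2 := by
  set c : ℕ × ℕ → ℝ := fun p =>
    α ^ (2 * k) * L ^ (-σ) * ((g p.1 * (p.1 : ℝ) ^ σ) * (g p.2 * (p.2 : ℝ) ^ σ))
  set A := Nat.smoothNumbersUpTo ⌊U⌋₊ ⌈y⌉₊
  have hc : ∀ p, 0 ≤ c p := fun p => by
    have h₁ := hg.nonneg p.1
    have h₂ := hg.nonneg p.2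
    positivity
  calc _ ≤ ∑ p ∈ smoothPairs y L U,
        c p * ∑ l ∈ Icc 1 ⌊H⌋₊, (#(siftedPairs X Y z p.1 p.2 l) : ℝ) := by
        refine convSum_le_sum_mul_card _ (fun p _ => hc p) _ ?_
        rintro l hl n hn ⟨w, ⟨hzw, hwy⟩, hLw, hwU⟩
        obtain ⟨hXn, hnX⟩ := (mem_shortInterval (by linarith)).1 hn
        have hlH : (l : ℝ) ≤ H := (Nat.le_floor_iff hH).1 (mem_Icc.1 hl).2
        have hn0 : n ≠ 0 := fun h => by simp [h] at hXn; linarith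
        refine ⟨_, smoothPart_mem_smoothPairs hwy hLw hwU,
          smoothPart_mem_siftedPairs hzw hn hn0,
          mul_le_rankin hg hα (by linarith) hL hσ hzw hn0 (by lia) ?_ ?_ hLw⟩
        · linarith
        · push_cast
          linarith
    _ ≤ ∑ p ∈ smoothPairs y L U, c p * (10 * Real.exp 6 * H * Y * mertensProd z ^ 2 *
          (psi p.1 ^ 2 / p.1) * (psi p.2 ^ 2 / p.2)) := by
        refine sum_le_sum fun p hp => mul_le_mul_of_nonneg_left ?_ (hc p)
        obtain ⟨hpA, -, hpU⟩ := mem_filter.1 hp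
        obtain ⟨h₁, h₂⟩ := mem_product.1 hpA
        have hpos {a : ℕ} (ha : a ∈ A) : 0 < a :=
          Nat.pos_of_ne_zero (Nat.ne_zero_of_mem_smoothNumbers (Nat.mem_smoothNumbersUpTo.1 ha).2)
        refine sum_card_siftedPairs_le hX.le hz hH (hpos h₁) (hpos h₂) (le_trans ?_ hU)
        push_cast at hpU
        gcongr
    _ = 10 * Real.exp 6 * α ^ (2 * k) * L ^ (-σ) * (H * Y) * mertensProd z ^ 2 *
          ∑ p ∈ smoothPairs y L U, weight g σ p.1 * weight g σ p.2 := by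
        rw [mul_sum]
        refine sum_congr rfl fun p _ => ?_
        simp only [c, weight]
        ring
    _ ≤ 10 * Real.exp 6 * α ^ (2 * k) * L ^ (-σ) * (H * Y) * mertensProd z ^ 2 *
          (∑ a ∈ A, weight g σ a) ^ 2 := by
        gcongr
        exact sum_smoothPairs_mul_le (weight_nonneg hg.nonneg σ)
    _ = _ := by ring

theorem convSum_splitsBetween_le (hα : 1 ≤ α) (hg : ShiuClass α β θ g) (hθ : θ ≤ 1 / 8)
    (hK : 0 ≤ K) (hKy : 8 * K ≤ Real.log y) (hY : 0 ≤ Y) (hYX : Y ≤ X) (hH : 0 ≤ H) (hHX : H ≤ X)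
    (hz : 2 ≤ z) (hzy : z ≤ y) (hyX : y ≤ X) (hL : 0 < L) (hk : 3 * X ≤ z ^ k)
    (hU : z ^ 222 * U ≤ Y) :
    convSum g X Y H (fun l n => SplitsBetween z y L U n (n + l)) ≤
      10 * Real.exp 6 * α ^ (2 * k) * L ^ (-(K / Real.log y)) *
        Real.exp (4 * excessBound α β K + 12 * Real.log X / Real.log z) *
        (H * Y * shiuProd g X ^ 2) := by
  have hlog : 0 < Real.log y := Real.log_pos (by linarith)
  have hprod := mertensProd_mul_sum_weight_le hg hθ hK hKy (by linarith) hzy hyX (by linarith)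
    (A := Nat.smoothNumbersUpTo ⌊U⌋₊ ⌈y⌉₊) fun a ha => (Nat.mem_smoothNumbersUpTo.1 ha).2
  have hpos : 0 ≤ mertensProd z *
      ∑ a ∈ Nat.smoothNumbersUpTo ⌊U⌋₊ ⌈y⌉₊, weight g (K / Real.log y) a :=
    mul_nonneg (mertensProd_pos z).le (sum_nonneg fun a _ => weight_nonneg hg.nonneg _ a)
  calc _ ≤ _ := convSum_splitsBetween_le_sum_weight hα hg (by positivity) (by linarith) hY hYX hH
        hHX hz hL hk hU
    _ ≤ 10 * Real.exp 6 * α ^ (2 * k) * L ^ (-(K / Real.log y)) * (H * Y) *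
          (Real.exp (2 * excessBound α β K) * Real.exp (6 * Real.log X / Real.log z) *
            shiuProd g X) ^ 2 :=
        mul_le_mul_of_nonneg_left (pow_le_pow_left₀ hpos hprod 2) (by positivity)
    _ = _ := by
        rw [mul_pow, mul_pow, ← Real.exp_nat_mul, ← Real.exp_nat_mul, ← Real.exp_add]
        push_cast
        ring_nf

end SplitBound

section Decomposition

variable {m n q w : ℕ} {M U : ℝ}

theorem exists_prime_mul_smoothPart_crosses (hU : 1 ≤ U)
    (hw : U < (smoothPart w m * smoothPart w n : ℕ)) :
    ∃ q < w, q.Prime ∧ ((smoothPart q m * smoothPart q n : ℕ) : ℝ) ≤ U ∧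
      U < (smoothPart (q + 1) m * smoothPart (q + 1) n : ℕ) := by
  induction w with
  | zero =>
    rw [smoothPart_zero, smoothPart_zero] at hw
    norm_num at hw
    linarith
  | succ w ih =>
    rcases le_or_gt ((smoothPart w m * smoothPart w n : ℕ) : ℝ) U with hle | hgt
    · refine ⟨w, w.lt_succ_self, by_contra fun hwp => ?_, hle, hw⟩
      rw [smoothPart_succ_of_not_prime hwp, smoothPart_succ_of_not_prime hwp] at hw
      exact hw.not_ge hle
    · obtain ⟨q, hqw, hq⟩ := ih hgt
      exact ⟨q, hqw.trans w.lt_succ_self, hq⟩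

theorem prime_pow_dvd_or_dvd (hq : q.Prime) (hm : m ≠ 0) (hn : n ≠ 0)
    (hle : ((smoothPart q m * smoothPart q n : ℕ) : ℝ) < M ^ 2)
    (hlt : M ^ 4 < (smoothPart (q + 1) m * smoothPart (q + 1) n : ℕ)) :
    q ^ Nat.clog q ⌈M⌉₊ ∣ m ∨ q ^ Nat.clog q ⌈M⌉₊ ∣ n := by
  by_contra! hdvd
  have hpow {r : ℕ} (hr : r ≠ 0) (hndvd : ¬ q ^ Nat.clog q ⌈M⌉₊ ∣ r) :
      ((q ^ r.factorization q : ℕ) : ℝ) < M :=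
    Nat.lt_ceil.1 <| (Nat.lt_clog_iff_pow_lt hq.one_lt).1 <|
      not_le.1 (mt (hq.pow_dvd_iff_le_factorization hr).2 hndvd)
  have hM : 0 < M := (Nat.cast_nonneg _).trans_lt (hpow hm hdvd.1)
  refine hlt.not_ge ?_
  rw [smoothPart_succ_of_prime hq, smoothPart_succ_of_prime hq]
  calc ((smoothPart q m * q ^ m.factorization q * (smoothPart q n * q ^ n.factorization q) : ℕ) : ℝ)
      = (smoothPart q m * smoothPart q n : ℕ) * ((q ^ m.factorization q : ℕ) *
          (q ^ n.factorization q : ℕ)) := by push_cast; ring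
    _ ≤ M ^ 2 * (M * M) := by
        gcongr
        exacts [(hpow hm hdvd.1).le, (hpow hn hdvd.2).le]
    _ = M ^ 4 := by ring

theorem exists_smooth_dvd_or_dvd
    (hle : M ^ 2 ≤ (smoothPart q m * smoothPart q n : ℕ))
    (hU : ((smoothPart q m * smoothPart q n : ℕ) : ℝ) ≤ U) :
    ∃ d ∈ q.smoothNumbers, M ≤ d ∧ (d : ℝ) ≤ U ∧ (d ∣ m ∨ d ∣ n) := by
  rcases le_or_gt M (smoothPart q m) with hMm | hMm
  · exact ⟨_, smoothPart_mem_smoothNumbers q m, hMm, (Nat.cast_le.2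
      (Nat.le_mul_of_pos_right _ (smoothPart_pos q n))).trans hU, Or.inl (smoothPart_dvd q m)⟩
  · refine ⟨_, smoothPart_mem_smoothNumbers q n, ?_, (Nat.cast_le.2
      (Nat.le_mul_of_pos_left _ (smoothPart_pos q m))).trans hU, Or.inr (smoothPart_dvd q n)⟩
    by_contra! hMn
    refine hle.not_gt ?_
    push_cast
    rw [sq]
    exact mul_lt_mul'' hMm hMn (Nat.cast_nonneg _) (Nat.cast_nonneg _)

theorem exists_root_le_prime_le_root {X u : ℝ} {R : ℕ} (hR : 0 < R) (hq : q.Prime) (hu : 1 < u)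
    (huq : u ≤ q) (hqX : (q : ℝ) ≤ X ^ (R : ℝ)⁻¹) (hX : 1 ≤ X) :
    ∃ r ∈ Icc R ⌊Real.log X / Real.log u⌋₊,
      X ^ ((r + 1 : ℕ) : ℝ)⁻¹ ≤ q ∧ (q : ℝ) ≤ X ^ (r : ℝ)⁻¹ := by
  have hX0 : 0 < X := by linarith
  have hfloor : ⌊X⌋₊ ≠ 0 := (Nat.floor_pos.2 hX).ne'
  have hroot {k : ℕ} (hk : 0 < k) : (q : ℝ) ≤ X ^ (k : ℝ)⁻¹ ↔ q ^ k ≤ ⌊X⌋₊ := by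
    rw [Real.le_rpow_inv_iff_of_pos (Nat.cast_nonneg _) hX0.le (by exact_mod_cast hk),
      Real.rpow_natCast, Nat.le_floor_iff hX0.le]
    push_cast
    rfl
  have hRr : R ≤ Nat.log q ⌊X⌋₊ := (Nat.le_log_iff_pow_le hq.one_lt hfloor).2 ((hroot hR).1 hqX)
  have hle : (q : ℝ) ^ Nat.log q ⌊X⌋₊ ≤ X := by
    exact_mod_cast (Nat.le_floor_iff hX0.le).1 (Nat.pow_log_le_self q hfloor)
  have hlt : X < (q : ℝ) ^ (Nat.log q ⌊X⌋₊ + 1) := by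
    exact_mod_cast (Nat.floor_lt hX0.le).1 (Nat.lt_pow_succ_log_self hq.one_lt ⌊X⌋₊)
  refine ⟨Nat.log q ⌊X⌋₊, mem_Icc.2 ⟨hRr, Nat.le_floor ?_⟩, ?_, ?_⟩
  · rw [le_div_iff₀ (Real.log_pos hu), ← Real.pow_le_iff_le_log (by linarith) hX0]
    exact (pow_le_pow_left₀ (by linarith) huq _).trans hle
  · rw [Real.rpow_inv_le_iff_of_pos hX0.le (Nat.cast_nonneg _) (by positivity), Real.rpow_natCast]
    exact hlt.le
  · exact (hroot (hR.trans_le hRr)).2 (Nat.pow_log_le_self q hfloor)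

/-- The smooth exceptional divisors: the `⌈u⌉₊`-smooth numbers in `[M, M⁴]`. -/
noncomputable def smoothModuli (u M : ℝ) : Finset ℕ :=
  {d ∈ Nat.smoothNumbersUpTo ⌊M ^ 4⌋₊ ⌈u⌉₊ | M ≤ ((d : ℕ) : ℝ)}

/-- The prime power exceptional divisors: for each prime `q < y`, the least power of `q` which is
at least `M`. -/
noncomputable def primePowerModuli (y M : ℝ) : Finset ℕ :=
  (primesLT y).image fun q => q ^ Nat.clog q ⌈M⌉₊

theorem splitsBetween_or_exists_dvd {X u : ℝ} {R : ℕ} (hX : 1 ≤ X) (hu : 1 < u) (hM : 1 ≤ M)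
    (hR : 0 < R) (hm : m ≠ 0) (hn : n ≠ 0) :
    SplitsBetween (X ^ (R : ℝ)⁻¹) (X ^ (R : ℝ)⁻¹) 1 (M ^ 4) m n ∨
    (∃ r ∈ Icc R ⌊Real.log X / Real.log u⌋₊,
      SplitsBetween (X ^ ((r + 1 : ℕ) : ℝ)⁻¹) (X ^ (r : ℝ)⁻¹) (M ^ 2) (M ^ 4) m n) ∨
    ∃ d ∈ smoothModuli u M ∪ primePowerModuli (X ^ (R : ℝ)⁻¹) M, d ∣ m ∨ d ∣ n := by
  rcases le_or_gt ((smoothPart ⌈X ^ (R : ℝ)⁻¹⌉₊ m * smoothPart ⌈X ^ (R : ℝ)⁻¹⌉₊ n : ℕ) : ℝ)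
    (M ^ 4) with hsmall | hlarge
  · refine Or.inl ⟨_, ⟨Nat.le_ceil _, le_rfl⟩, ?_, hsmall⟩
    exact_mod_cast Nat.mul_pos (smoothPart_pos _ m) (smoothPart_pos _ n)
  obtain ⟨q, hqw, hq, hqle, hqlt⟩ := exists_prime_mul_smoothPart_crosses (one_le_pow₀ hM) hlarge
  have hqX : (q : ℝ) < X ^ (R : ℝ)⁻¹ := Nat.lt_ceil.1 hqw
  right
  rcases lt_or_ge ((smoothPart q m * smoothPart q n : ℕ) : ℝ) (M ^ 2) with hjump | hmid
  · exact Or.inr ⟨_, mem_union_right _ (mem_image_of_mem _ (mem_primesLT.2 ⟨hq, hqX⟩)),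
      prime_pow_dvd_or_dvd hq hm hn hjump hqlt⟩
  rcases lt_or_ge (q : ℝ) u with hqu | hqu
  · obtain ⟨d, hdq, hMd, hdM, hdvd⟩ := exists_smooth_dvd_or_dvd hmid hqle
    refine Or.inr ⟨d, mem_union_left _ (mem_filter.2 ⟨Nat.mem_smoothNumbersUpTo.2
      ⟨Nat.le_floor hdM, Nat.smoothNumbers_mono ?_ hdq⟩, hMd⟩), hdvd⟩
    exact_mod_cast hqu.le.trans (Nat.le_ceil u)
  · obtain ⟨r, hr, hroot, hqr⟩ := exists_root_le_prime_le_root hR hq hu hqu hqX.le hX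
    refine Or.inl ⟨r, hr, q, ⟨hroot, ?_⟩, hmid, hqle⟩
    exact_mod_cast hqr.trans (Nat.le_ceil _)

end Decomposition

section ExceptionalModuli

variable {u y M : ℝ} {d : ℕ}

theorem mem_Icc_of_mem_primePowerModuli (hM : 1 < M) (hd : d ∈ primePowerModuli y M) :
    (d : ℝ) ∈ Set.Icc M (y * M) := by
  obtain ⟨q, hq, rfl⟩ := mem_image.1 hd
  obtain ⟨hqp, hqy⟩ := mem_primesLT.1 hq
  have hceil : 1 < ⌈M⌉₊ := Nat.lt_ceil.2 (by exact_mod_cast hM)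
  refine ⟨Nat.ceil_le.1 (Nat.le_pow_clog hqp.one_lt _), ?_⟩
  rw [← Nat.sub_add_cancel (Nat.clog_pos hqp.one_lt hceil), Nat.pow_succ', Nat.cast_mul]
  have hpred : ((q ^ (Nat.clog q ⌈M⌉₊ - 1) : ℕ) : ℝ) < M :=
    Nat.lt_ceil.1 (Nat.pow_pred_clog_lt_self hqp.one_lt hceil)
  exact mul_le_mul hqy.le hpred.le (Nat.cast_nonneg _) ((Nat.cast_nonneg q).trans hqy.le)

theorem sum_primePowerModuli_le (hy : 0 ≤ y) (hM : 1 < M) :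
    ∑ d ∈ primePowerModuli y M, 1 / (d : ℝ) ≤ y / M := by
  have hcard : (#(primePowerModuli y M) : ℝ) ≤ y := by
    have hsub : primesLT y ⊆ Icc 1 ⌊y⌋₊ := fun q hq => by
      obtain ⟨hqp, hqy⟩ := mem_primesLT.1 hq
      exact mem_Icc.2 ⟨hqp.pos, Nat.le_floor hqy.le⟩
    have hle : #(primePowerModuli y M) ≤ _ := card_image_le.trans (card_le_card hsub)
    rw [Nat.card_Icc, Nat.add_sub_cancel] at hle
    exact (Nat.cast_le.2 hle).trans (Nat.floor_le hy)
  calc ∑ d ∈ primePowerModuli y M, 1 / (d : ℝ) ≤ #(primePowerModuli y M) • (1 / M) :=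
        sum_le_card_nsmul _ _ _ fun d hd => one_div_le_one_div_of_le (by linarith)
          (mem_Icc_of_mem_primePowerModuli hM hd).1
    _ = #(primePowerModuli y M) / M := by rw [nsmul_eq_mul, mul_one_div]
    _ ≤ y / M := by gcongr

theorem shiuClass_one : ShiuClass 1 1 0 (fun _ => 1) where
  map_one := rfl
  map_mul := by simp
  nonneg := by simp
  prime_pow_le := by simp
  le_mul_rpow := by simp

theorem sum_smoothModuli_le (hM : 0 < M) :
    ∑ d ∈ smoothModuli u M, 1 / (d : ℝ) ≤ (∏ p ∈ Nat.primesBelow ⌈u⌉₊,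
      (1 + 1 / (p : ℝ) + localExcess 1 1 (1 / 4) p)) * M ^ (-(1 / 4) : ℝ) := by
  have hterm : ∀ d ∈ smoothModuli u M,
      1 / (d : ℝ) ≤ weight (fun _ => 1) (1 / 4) d * M ^ (-(1 / 4) : ℝ) := fun d hd => by
    have hMd := (mem_filter.1 hd).2
    have hd0 : (0 : ℝ) < d := hM.trans_le hMd
    have hrankin : 1 ≤ (d : ℝ) ^ (1 / 4 : ℝ) * M ^ (-(1 / 4) : ℝ) := by
      rw [Real.rpow_neg hM.le, ← div_eq_mul_inv, one_le_div (by positivity)]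
      exact Real.rpow_le_rpow hM.le hMd (by norm_num)
    calc 1 / (d : ℝ) ≤ psi d ^ 2 / d := by
          gcongr
          exact one_le_pow₀ (one_le_psi d)
      _ ≤ psi d ^ 2 / d * ((d : ℝ) ^ (1 / 4 : ℝ) * M ^ (-(1 / 4) : ℝ)) :=
          le_mul_of_one_le_right (by positivity) hrankin
      _ = _ := by rw [weight]; ring
  calc _ ≤ ∑ d ∈ smoothModuli u M, weight (fun _ => 1) (1 / 4) d * M ^ (-(1 / 4) : ℝ) :=
        sum_le_sum hterm
    _ = (∑ d ∈ smoothModuli u M, weight (fun _ => 1) (1 / 4) d) * M ^ (-(1 / 4) : ℝ) :=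
        (sum_mul _ _ _).symm
    _ ≤ _ := by
        gcongr
        exact sum_weight_le_prod shiuClass_one (by norm_num) (by norm_num) (by norm_num)
          fun d hd => (Nat.mem_smoothNumbersUpTo.1 (mem_filter.1 hd).1).2

end ExceptionalModuli

section Exceptional

variable {α β θ X Y H : ℝ} {g : ℕ → ℝ}

theorem inv_le_rpow_mul_shiuProd (hg : ∀ n, 0 ≤ g n) {w : ℝ} (hw : 1 < w) (hwX : w ≤ X)
    (hX : 2 ≤ X) : w⁻¹ ≤ X ^ (6 / Real.log w) * shiuProd g X := by
  calc w⁻¹ ≤ mertensProd w * 1 := by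
        rw [mul_one]
        exact inv_le_mertensProd hw
    _ ≤ mertensProd w * ∏ p ∈ primesLT w, (1 + g p / p + 0) := by
        gcongr
        · exact (mertensProd_pos w).le
        · exact one_le_prod fun p _ => by linarith [div_nonneg (hg p) p.cast_nonneg]
    _ ≤ _ := mertensProd_mul_prod_le hg (fun _ _ => le_rfl) hw le_rfl hwX hX
    _ = X ^ (6 / Real.log w) * shiuProd g X := by
        rw [sum_const_zero, Real.rpow_def_of_pos (by linarith)]
        ring_nf

theorem card_dvd_or_dvd_add_le (hX : 0 ≤ X) {d : ℕ} (hd : 0 < d) (hdY : (d : ℝ) ≤ Y) (l : ℕ) :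
    (#{n ∈ shortInterval X Y | d ∣ n ∨ d ∣ n + l} : ℝ) ≤ 6 * Y * (1 / d) := by
  have hd0 : (0 : ℝ) < d := Nat.cast_pos.2 hd
  have hYd : 1 ≤ Y / d := (one_le_div hd0).2 hdY
  have hleft := abs_card_dvd_and_dvd_add_sub_le hX (hd0.le.trans hdY) hd one_pos
    (l := l) (by simp)
  have hright := abs_card_dvd_and_dvd_add_sub_le hX (hd0.le.trans hdY) one_pos hd
    (l := l) (by simp)
  simp only [one_dvd, and_true, true_and, Nat.lcm_one_left, Nat.lcm_one_right] at hleft hright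
  have hunion : (#{n ∈ shortInterval X Y | d ∣ n ∨ d ∣ n + l} : ℝ) ≤
      #{n ∈ shortInterval X Y | d ∣ n} + #{n ∈ shortInterval X Y | d ∣ n + l} := by
    rw [filter_or]
    exact_mod_cast card_union_le _ _
  rw [mul_assoc, mul_one_div]
  linarith [(abs_le.1 hleft).2, (abs_le.1 hright).2]

theorem ShiuClass.le_three_mul (hg : ShiuClass α β θ g) (hθ0 : 0 ≤ θ) (hθ1 : θ ≤ 1) {m : ℕ}
    (hm : 1 ≤ m) (hX : 0 ≤ X) (hmX : (m : ℝ) ≤ 3 * X) : g m ≤ 3 * β * X ^ θ := by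
  have hβ := hg.one_le_beta
  calc g m ≤ β * (m : ℝ) ^ θ := hg.le_mul_rpow m hm
    _ ≤ β * (3 * X) ^ θ := by gcongr
    _ = β * (3 ^ θ * X ^ θ) := by rw [Real.mul_rpow (by norm_num) hX]
    _ ≤ β * (3 ^ (1 : ℝ) * X ^ θ) := by
        gcongr
        norm_num
    _ = 3 * β * X ^ θ := by
        rw [Real.rpow_one]
        ring

theorem convSum_exists_dvd_le (hg : ShiuClass α β θ g) (hθ0 : 0 ≤ θ) (hθ1 : θ ≤ 1) (hX : 0 < X)
    (hY : 0 ≤ Y) (hYX : Y ≤ X) (hH : 0 ≤ H) (hHX : H ≤ X) {D : Finset ℕ}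
    (hD : ∀ d ∈ D, 0 < d ∧ (d : ℝ) ≤ Y) :
    convSum g X Y H (fun l n => ∃ d ∈ D, d ∣ n ∨ d ∣ n + l) ≤
      54 * β ^ 2 * X ^ (2 * θ) * (H * Y) * ∑ d ∈ D, 1 / (d : ℝ) := by
  have hβ := hg.one_le_beta
  have hsq : 3 * β * X ^ θ * (3 * β * X ^ θ) = 9 * β ^ 2 * X ^ (2 * θ) := by
    rw [two_mul, Real.rpow_add hX]
    ring
  calc _ ≤ ∑ d ∈ D, 9 * β ^ 2 * X ^ (2 * θ) *
          ∑ l ∈ Icc 1 ⌊H⌋₊, (#{n ∈ shortInterval X Y | d ∣ n ∨ d ∣ n + l} : ℝ) := by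
        refine convSum_le_sum_mul_card D (fun d _ => by positivity) _ ?_
        rintro l hl n hn ⟨d, hd, hdvd⟩
        obtain ⟨hXn, hnX⟩ := (mem_shortInterval (by linarith)).1 hn
        have hlH : (l : ℝ) ≤ H := (Nat.le_floor_iff hH).1 (mem_Icc.1 hl).2
        have hn1 : 1 ≤ n := by exact_mod_cast hX.trans_le hXn
        refine ⟨d, hd, mem_filter.2 ⟨hn, hdvd⟩, hsq ▸ mul_le_mul
          (hg.le_three_mul hθ0 hθ1 hn1 hX.le (by linarith))
          (hg.le_three_mul hθ0 hθ1 (by lia) hX.le ?_) (hg.nonneg _) (by positivity)⟩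
        push_cast
        linarith
    _ ≤ ∑ d ∈ D, 9 * β ^ 2 * X ^ (2 * θ) * (H * (6 * Y * (1 / d))) := by
        refine sum_le_sum fun d hd => mul_le_mul_of_nonneg_left ?_ (by positivity)
        refine (sum_le_card_nsmul _ _ _ fun l _ =>
          card_dvd_or_dvd_add_le hX.le (hD d hd).1 (hD d hd).2 l).trans ?_
        rw [Nat.card_Icc, Nat.add_sub_cancel, nsmul_eq_mul]
        gcongr
        exact Nat.floor_le hH
    _ = _ := by
        rw [mul_sum]
        exact sum_congr rfl fun d _ => by ring

theorem convSum_exists_dvd_le_of_sum_le (hg : ShiuClass α β θ g) (hθ : 0 < θ) (hθ1 : θ ≤ 1)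
    (hX : 2 ≤ X) (hθX : 6 / θ ≤ Real.log X) (hY : 0 ≤ Y) (hYX : Y ≤ X) (hH : 0 ≤ H) (hHX : H ≤ X)
    {D : Finset ℕ} {S : ℝ} (hD : ∀ d ∈ D, 0 < d ∧ (d : ℝ) ≤ Y) (hS : 0 ≤ S)
    (hDS : ∑ d ∈ D, 1 / (d : ℝ) ≤ S * X ^ (-(4 * θ))) :
    convSum g X Y H (fun l n => ∃ d ∈ D, d ∣ n ∨ d ∣ n + l) ≤
      54 * β ^ 2 * S * Real.exp (12 / θ) * (H * Y * shiuProd g X ^ 2) := by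
  have hX0 : 0 < X := by linarith
  have hprod : 1 ≤ Real.exp (6 / θ) * (X ^ θ * shiuProd g X) := by
    have hw := inv_le_rpow_mul_shiuProd hg.nonneg (Real.one_lt_exp_iff.2 (by positivity))
      ((Real.le_log_iff_exp_le hX0).1 hθX) hX
    rwa [Real.log_exp, div_div_cancel₀ (by norm_num), inv_le_iff_one_le_mul₀' (Real.exp_pos _)]
      at hw
  calc _ ≤ 54 * β ^ 2 * X ^ (2 * θ) * (H * Y) * ∑ d ∈ D, 1 / (d : ℝ) :=
        convSum_exists_dvd_le hg hθ.le hθ1 hX0 hY hYX hH hHX hD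
    _ ≤ 54 * β ^ 2 * X ^ (2 * θ) * (H * Y) * (S * X ^ (-(4 * θ))) * 1 := by
        rw [mul_one]
        gcongr
    _ ≤ 54 * β ^ 2 * X ^ (2 * θ) * (H * Y) * (S * X ^ (-(4 * θ))) *
          (Real.exp (6 / θ) * (X ^ θ * shiuProd g X)) ^ 2 := by
        gcongr
        exact one_le_pow₀ hprod
    _ = 54 * β ^ 2 * S * Real.exp (6 / θ) ^ 2 * (H * Y * shiuProd g X ^ 2) *
          (X ^ (2 * θ) * X ^ (-(4 * θ)) * (X ^ θ) ^ 2) := by ring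
    _ = _ := by
        rw [← Real.exp_nat_mul, ← Real.rpow_mul_natCast hX0.le, ← Real.rpow_add hX0,
          ← Real.rpow_add hX0, show 2 * θ + -(4 * θ) + θ * (2 : ℕ) = 0 by push_cast; ring,
          Real.rpow_zero, mul_one]
        push_cast
        ring_nf

end Exceptional

section Assembly

variable {α β θ ε K L X Y H : ℝ} {g : ℕ → ℝ} {R : ℕ}

theorem convSum_le_add (hg : ∀ n, 0 ≤ g n) {E F G : ℕ → ℕ → Prop}
    (h : ∀ l, ∀ n ∈ shortInterval X Y, E l n → F l n ∨ G l n) :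
    convSum g X Y H E ≤ convSum g X Y H F + convSum g X Y H G := by
  rw [convSum, convSum, convSum, ← sum_add_distrib]
  refine sum_le_sum fun l _ => ?_
  simp only [sum_filter, ← sum_add_distrib]
  refine sum_le_sum fun n hn => ?_
  have hgn := mul_nonneg (hg n) (hg (n + l))
  have := h l n hn
  split_ifs <;> first | tauto | linarith

theorem rpow_mul_rpow_pow_le (hX : 1 ≤ X) {s : ℕ} (hs : 0 < s) (hεs : 250 ≤ ε * s) :
    (X ^ (s : ℝ)⁻¹) ^ 222 * (X ^ (ε / 40)) ^ 4 ≤ X ^ ε := by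
  have hX0 : 0 < X := by linarith
  have hs0 : (0 : ℝ) < s := Nat.cast_pos.2 hs
  have hinv : (s : ℝ)⁻¹ * 250 ≤ ε := by
    rw [inv_mul_le_iff₀ hs0]
    linarith
  rw [← Real.rpow_mul_natCast hX0.le, ← Real.rpow_mul_natCast hX0.le, ← Real.rpow_add hX0]
  refine Real.rpow_le_rpow_of_exponent_le hX ?_
  push_cast
  linarith [inv_pos.2 hs0]

theorem convSum_splitsBetween_root_le (hα : 1 ≤ α) (hg : ShiuClass α β θ g) (hθ : θ ≤ 1 / 8)
    (hK : 1 ≤ K) (hX : 2 ≤ X) (hXY : X ^ ε ≤ Y) (hYX : Y ≤ X) (hH : 0 ≤ H) (hHX : H ≤ X)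
    (hL : 0 < L) {r s : ℕ} (hr : 0 < r) (hrs : r ≤ s) (hsr : s ≤ 2 * r) (hεs : 250 ≤ ε * s)
    (hKX : 8 * K * r ≤ Real.log X) :
    convSum g X Y H (fun l n =>
      SplitsBetween (X ^ (s : ℝ)⁻¹) (X ^ (r : ℝ)⁻¹) L ((X ^ (ε / 40)) ^ 4) n (n + l)) ≤
      10 * Real.exp 6 * α ^ (6 * s) * L ^ (-(K * r / Real.log X)) *
        Real.exp (4 * excessBound α β K + 12 * s) * (H * Y * shiuProd g X ^ 2) := by
  have hX0 : 0 < X := by linarith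
  have hr0 : (0 : ℝ) < r := Nat.cast_pos.2 hr
  have hs : 0 < s := hr.trans_le hrs
  have hs0 : (0 : ℝ) < s := Nat.cast_pos.2 hs
  have hlog : 0 < Real.log X := Real.log_pos (by linarith)
  have hlogroot (t : ℝ) : Real.log (X ^ t⁻¹) = Real.log X / t := by
    rw [Real.log_rpow hX0, inv_mul_eq_div]
  have hz : 2 ≤ X ^ (s : ℝ)⁻¹ := by
    have hone : 1 ≤ Real.log (X ^ (s : ℝ)⁻¹) := by
      rw [hlogroot, one_le_div hs0]
      have : (s : ℝ) ≤ 2 * r := by exact_mod_cast hsr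
      nlinarith
    linarith [Real.add_one_le_exp 1, (Real.le_log_iff_exp_le (by positivity)).1 hone]
  have hcube : 3 * X ≤ (X ^ (s : ℝ)⁻¹) ^ (3 * s) := by
    rw [mul_comm 3 s, pow_mul, Real.rpow_inv_natCast_pow hX0.le hs.ne']
    calc 3 * X ≤ X ^ 2 * X := by
          gcongr
          nlinarith
      _ = X ^ 3 := by ring
  refine (convSum_splitsBetween_le (K := K) hα hg hθ (by linarith) ?_
    (hXY.trans' (by positivity)) hYX hH hHX hz
    (Real.rpow_le_rpow_of_exponent_le (by linarith) ?_) ?_ hL hcube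
    ((rpow_mul_rpow_pow_le (by linarith) hs hεs).trans hXY)).trans_eq ?_
  · rwa [hlogroot, le_div_iff₀ hr0]
  · gcongr
  · exact Real.rpow_le_self_of_one_le (by linarith)
      (inv_le_one_of_one_le₀ (by exact_mod_cast hr))
  · rw [hlogroot, hlogroot, mul_div_assoc 12, div_div_cancel₀ hlog.ne', div_div_eq_mul_div]
    ring_nf

theorem convSum_splitsBetween_consecutive_roots_le (hα : 1 ≤ α) (hg : ShiuClass α β θ g)
    (hθ : θ ≤ 1 / 8) (hK : 1 ≤ K) (hεK : 20 * (6 * Real.log α + 13) ≤ ε * K) (hX : 2 ≤ X)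
    (hXY : X ^ ε ≤ Y) (hYX : Y ≤ X) (hH : 0 ≤ H) (hHX : H ≤ X) {r : ℕ} (hr : 0 < r)
    (hεr : 250 ≤ ε * (r + 1 : ℕ)) (hKX : 8 * K * r ≤ Real.log X) :
    convSum g X Y H (fun l n => SplitsBetween (X ^ ((r + 1 : ℕ) : ℝ)⁻¹) (X ^ (r : ℝ)⁻¹)
      ((X ^ (ε / 40)) ^ 2) ((X ^ (ε / 40)) ^ 4) n (n + l)) ≤
      10 * α ^ 6 * Real.exp (4 * excessBound α β K + 18) * (H * Y * shiuProd g X ^ 2) *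
        Real.exp (-r) := by
  have hX0 : 0 < X := by linarith
  have hY : 0 ≤ Y := hXY.trans' (by positivity)
  have hlog : 0 < Real.log X := Real.log_pos (by linarith)
  have hrankin : α ^ (6 * r) * ((X ^ (ε / 40)) ^ 2) ^ (-(K * r / Real.log X)) ≤
      Real.exp (-(13 * r)) := by
    calc _ = Real.exp (-((ε * K / 20 - 6 * Real.log α) * r)) := by
          rw [← Real.rpow_mul_natCast hX0.le, ← Real.rpow_mul hX0.le, Real.rpow_def_of_pos hX0,
            ← Real.exp_log (by linarith : 0 < α), ← Real.exp_nat_mul, ← Real.exp_add,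
            Real.log_exp]
          congr 1
          push_cast
          field_simp
          ring
      _ ≤ _ := by
          gcongr
          linarith
  refine (convSum_splitsBetween_root_le hα hg hθ hK hX hXY hYX hH hHX (by positivity) hr
    (by lia) (by lia) hεr hKX).trans ?_
  calc _ = 10 * α ^ 6 * (Real.exp 6 * Real.exp (4 * excessBound α β K + 12 * (r + 1 : ℕ))) *
          (H * Y * shiuProd g X ^ 2) *
          (α ^ (6 * r) * ((X ^ (ε / 40)) ^ 2) ^ (-(K * r / Real.log X))) := by
        rw [mul_add, pow_add]
        ring
    _ ≤ 10 * α ^ 6 * (Real.exp 6 * Real.exp (4 * excessBound α β K + 12 * (r + 1 : ℕ))) *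
          (H * Y * shiuProd g X ^ 2) * Real.exp (-(13 * r)) := by gcongr
    _ = 10 * α ^ 6 * (H * Y * shiuProd g X ^ 2) * Real.exp (6 +
          (4 * excessBound α β K + 12 * (r + 1 : ℕ)) + -(13 * r)) := by
        rw [Real.exp_add (6 + _), Real.exp_add 6]
        ring
    _ = 10 * α ^ 6 * (H * Y * shiuProd g X ^ 2) * Real.exp (4 * excessBound α β K + 18 + -r) := by
        push_cast
        ring_nf
    _ = _ := by
        rw [Real.exp_add]
        ring

theorem sum_convSum_splitsBetween_le (hα : 1 ≤ α) (hg : ShiuClass α β θ g)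
    (hθ : θ ≤ 1 / 8) (hK : 1 ≤ K) (hεK : 20 * (6 * Real.log α + 13) ≤ ε * K) (hε : 0 ≤ ε)
    (hX : 2 ≤ X) (hXY : X ^ ε ≤ Y) (hYX : Y ≤ X) (hH : 0 ≤ H) (hHX : H ≤ X) (hεR : 250 ≤ ε * R) :
    ∑ r ∈ Icc R ⌊Real.log X / (8 * K)⌋₊, convSum g X Y H (fun l n =>
      SplitsBetween (X ^ ((r + 1 : ℕ) : ℝ)⁻¹) (X ^ (r : ℝ)⁻¹)
        ((X ^ (ε / 40)) ^ 2) ((X ^ (ε / 40)) ^ 4) n (n + l)) ≤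
      10 * α ^ 6 * Real.exp (4 * excessBound α β K + 18) * (∑' r : ℕ, Real.exp (-r)) *
        (H * Y * shiuProd g X ^ 2) := by
  have hY : 0 ≤ Y := hXY.trans' (by positivity)
  have hlog : 0 < Real.log X := Real.log_pos (by linarith)
  have hR : 0 < R := Nat.pos_of_ne_zero fun h => by norm_num [h] at hεR
  calc _ ≤ ∑ r ∈ Icc R ⌊Real.log X / (8 * K)⌋₊, 10 * α ^ 6 *
          Real.exp (4 * excessBound α β K + 18) * (H * Y * shiuProd g X ^ 2) *
          Real.exp (-r) := by
        refine sum_le_sum fun r hr => ?_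
        obtain ⟨hRr, hrX⟩ := mem_Icc.1 hr
        refine convSum_splitsBetween_consecutive_roots_le hα hg hθ hK hεK hX hXY hYX hH hHX
          (hR.trans_le hRr) (hεR.trans ?_) ?_
        · gcongr
          lia
        · rw [← le_div_iff₀' (by linarith)]
          exact (Nat.le_floor_iff (by positivity)).1 hrX
    _ ≤ 10 * α ^ 6 * Real.exp (4 * excessBound α β K + 18) * (H * Y * shiuProd g X ^ 2) *
          ∑' r : ℕ, Real.exp (-r) := by
        rw [← mul_sum]
        gcongr
        exact Real.summable_exp_neg_nat.sum_le_tsum _ fun _ _ => by positivity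
    _ = _ := by ring

theorem pos_and_le_of_mem_moduli (hX : 2 ≤ X) (hε : 0 < ε) (hXY : X ^ ε ≤ Y) (hεR : 250 ≤ ε * R)
    {u : ℝ} {d : ℕ}
    (hd : d ∈ smoothModuli u (X ^ (ε / 40)) ∪ primePowerModuli (X ^ (R : ℝ)⁻¹) (X ^ (ε / 40))) :
    0 < d ∧ (d : ℝ) ≤ Y := by
  have hM : 1 < X ^ (ε / 40) := Real.one_lt_rpow (by linarith) (by positivity)
  have hR : 0 < R := Nat.pos_of_ne_zero fun h => by norm_num [h] at hεR
  have hz : 1 ≤ X ^ (R : ℝ)⁻¹ := Real.one_le_rpow (by linarith) (by positivity)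
  have hMY := (rpow_mul_rpow_pow_le (by linarith) hR hεR).trans hXY
  rcases mem_union.1 hd with hd | hd
  · obtain ⟨hdM, hMd⟩ := mem_filter.1 hd
    have hdle := (Nat.le_floor_iff (by positivity)).1 (Nat.mem_smoothNumbersUpTo.1 hdM).1
    refine ⟨Nat.cast_pos.1 ((zero_lt_one.trans hM).trans_le hMd), (hdle.trans ?_).trans hMY⟩
    exact le_mul_of_one_le_left (by positivity) (one_le_pow₀ hz)
  · obtain ⟨hMd, hdM⟩ := mem_Icc_of_mem_primePowerModuli hM hd
    refine ⟨Nat.cast_pos.1 ((zero_lt_one.trans hM).trans_le hMd), (hdM.trans ?_).trans hMY⟩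
    gcongr
    · exact le_self_pow₀ hz (by norm_num)
    · exact le_self_pow₀ hM.le (by norm_num)

theorem exists_sum_moduli_le (u : ℝ) : ∃ S : ℝ, 0 ≤ S ∧ ∀ {X ε : ℝ} {R : ℕ}, 2 ≤ X → 0 < ε →
    250 ≤ ε * R → ∑ d ∈ smoothModuli u (X ^ (ε / 40)) ∪
      primePowerModuli (X ^ (R : ℝ)⁻¹) (X ^ (ε / 40)), 1 / (d : ℝ) ≤
        S * X ^ (-(4 * (ε / 1000))) := by
  set P := ∏ p ∈ Nat.primesBelow ⌈u⌉₊, (1 + 1 / (p : ℝ) + localExcess 1 1 (1 / 4) p)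
  have hP : 0 ≤ P := prod_nonneg fun p hp => by
    have := localExcess_nonneg zero_le_one zero_le_one (by norm_num : (0 : ℝ) ≤ 1 / 4)
      (Nat.prime_of_mem_primesBelow hp)
    positivity
  refine ⟨P + 1, by positivity, fun {X ε R} hX hε hεR => ?_⟩
  have hX0 : 0 < X := by linarith
  have hR : (0 : ℝ) < R := pos_of_mul_pos_right (by linarith) hε.le
  have hinv : (R : ℝ)⁻¹ * 250 ≤ ε := by
    rw [inv_mul_le_iff₀ hR]
    linarith
  have hM : 1 < X ^ (ε / 40) := Real.one_lt_rpow (by linarith) (by positivity)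
  calc _ ≤ ∑ d ∈ smoothModuli u (X ^ (ε / 40)), 1 / (d : ℝ) +
          ∑ d ∈ primePowerModuli (X ^ (R : ℝ)⁻¹) (X ^ (ε / 40)), 1 / (d : ℝ) := by
        rw [← sum_union_inter]
        exact le_add_of_nonneg_right (sum_nonneg fun d _ => by positivity)
    _ ≤ P * (X ^ (ε / 40)) ^ (-(1 / 4) : ℝ) + X ^ (R : ℝ)⁻¹ / X ^ (ε / 40) :=
        add_le_add (sum_smoothModuli_le (by linarith))
          (sum_primePowerModuli_le (by positivity) hM)
    _ ≤ P * X ^ (-(4 * (ε / 1000))) + X ^ (-(4 * (ε / 1000))) := by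
        rw [← Real.rpow_mul hX0.le, ← Real.rpow_sub hX0]
        gcongr <;> linarith
    _ = (P + 1) * X ^ (-(4 * (ε / 1000))) := by ring

theorem convSum_le_of_log_le (hg : ShiuClass α β θ g) (hθ0 : 0 ≤ θ) (hθ1 : θ ≤ 1) (hX : 2 ≤ X)
    (hY : 1 ≤ Y) (hYX : Y ≤ X) (hH : 0 ≤ H) (hHX : H ≤ X) {T : ℝ} (hT : Real.log X ≤ T) :
    convSum g X Y H (fun _ _ => True) ≤
      54 * β ^ 2 * Real.exp (4 * T + 12) * (H * Y * shiuProd g X ^ 2) := by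
  have hX0 : 0 < X := by linarith
  have hlog : 0 < Real.log X := Real.log_pos (by linarith)
  have hpow : X ^ (2 * θ) ≤ Real.exp (2 * T) := by
    rw [Real.rpow_def_of_pos hX0, mul_comm]
    gcongr
    linarith
  have hprod : 1 ≤ Real.exp (T + 6) * shiuProd g X := by
    have hP := shiuProd_pos hg.nonneg X
    have hinv := inv_le_rpow_mul_shiuProd hg.nonneg (by linarith) le_rfl hX
    rw [Real.rpow_def_of_pos hX0, mul_div_cancel₀ _ hlog.ne', inv_le_iff_one_le_mul₀' hX0] at hinv
    refine hinv.trans ?_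
    rw [Real.exp_add, mul_assoc]
    gcongr
    exact (Real.log_le_iff_le_exp hX0).1 hT
  have htriv := convSum_exists_dvd_le hg hθ0 hθ1 hX0 (by linarith) hYX hH hHX (D := {1})
    (by simpa using hY)
  simp only [mem_singleton, exists_eq_left, one_dvd, true_or, sum_singleton, Nat.cast_one,
    div_one, mul_one] at htriv
  calc _ ≤ 54 * β ^ 2 * X ^ (2 * θ) * (H * Y) * 1 := by rwa [mul_one]
    _ ≤ 54 * β ^ 2 * Real.exp (2 * T) * (H * Y) * (Real.exp (T + 6) * shiuProd g X) ^ 2 := by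
        gcongr
        exact one_le_pow₀ hprod
    _ = 54 * β ^ 2 * (Real.exp (2 * T) * Real.exp (T + 6) ^ 2) * (H * Y * shiuProd g X ^ 2) := by
        ring
    _ = _ := by
        rw [← Real.exp_nat_mul, ← Real.exp_add]
        push_cast
        ring_nf

theorem convSum_true_le (hg : ∀ n, 0 ≤ g n) (hX : 1 ≤ X) (hY : 0 ≤ Y) {u M : ℝ} (hu : 1 < u)
    (hM : 1 ≤ M) (hR : 0 < R) :
    convSum g X Y H (fun _ _ => True) ≤
      convSum g X Y H (fun l n =>
        SplitsBetween (X ^ (R : ℝ)⁻¹) (X ^ (R : ℝ)⁻¹) 1 (M ^ 4) n (n + l)) +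
      (∑ r ∈ Icc R ⌊Real.log X / Real.log u⌋₊, convSum g X Y H (fun l n =>
        SplitsBetween (X ^ ((r + 1 : ℕ) : ℝ)⁻¹) (X ^ (r : ℝ)⁻¹) (M ^ 2) (M ^ 4) n (n + l)) +
      convSum g X Y H (fun l n => ∃ d ∈ smoothModuli u M ∪ primePowerModuli (X ^ (R : ℝ)⁻¹) M,
        d ∣ n ∨ d ∣ n + l)) := by
  refine (convSum_le_add hg fun l n hn _ => ?_).trans <| add_le_add_right
    ((convSum_le_add hg fun _ _ _ => id).trans <| add_le_add_left
      (convSum_le_sum hg _ _ fun _ _ _ _ => id) _) _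
  have hXn := ((mem_shortInterval (by linarith)).1 hn).1
  have hn0 : n ≠ 0 := fun h => by simp [h] at hXn; linarith
  exact splitsBetween_or_exists_dvd hX hu hM hR hn0 (by lia)

theorem exists_convSum_le_of_le_log (β : ℝ) (hα : 1 ≤ α) (hε0 : 0 < ε) (hε1 : ε ≤ 1) :
    ∃ T C : ℝ, ∀ {g : ℕ → ℝ} {X Y H : ℝ}, ShiuClass α β (ε / 1000) g → T ≤ Real.log X → 2 ≤ X →
      X ^ ε ≤ Y → Y ≤ X → 0 ≤ H → H ≤ X →
        convSum g X Y H (fun _ _ => True) ≤ C * (H * Y * shiuProd g X ^ 2) := by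
  have hlogα := Real.log_nonneg hα
  set K := 20 * (6 * Real.log α + 13) / ε
  have hεK : 20 * (6 * Real.log α + 13) ≤ ε * K := (mul_div_cancel₀ _ hε0.ne').ge
  have hK : 1 ≤ K := (one_le_div hε0).2 (by linarith)
  set R := ⌈250 / ε⌉₊
  have hεR : 250 ≤ ε * R := (div_le_iff₀' hε0).1 (Nat.le_ceil _)
  have hR : 0 < R := Nat.ceil_pos.2 (by positivity)
  obtain ⟨S, hS, hsum⟩ := exists_sum_moduli_le (Real.exp (8 * K))
  refine ⟨8 * K * R + 6 / (ε / 1000),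
    10 * Real.exp 6 * α ^ (6 * R) * Real.exp (4 * excessBound α β K + 12 * R) +
      (10 * α ^ 6 * Real.exp (4 * excessBound α β K + 18) * (∑' r : ℕ, Real.exp (-r)) +
        54 * β ^ 2 * S * Real.exp (12 / (ε / 1000))), fun {g X Y H} hg hT hX hXY hYX hH hHX => ?_⟩
  have hKX : 8 * K * R ≤ Real.log X := le_of_add_le_of_nonneg_left hT (by positivity)
  have hεX : 6 / (ε / 1000) ≤ Real.log X := le_of_add_le_of_nonneg_right hT (by positivity)
  have hY : 0 ≤ Y := hXY.trans' (by positivity)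
  have hM : 1 ≤ X ^ (ε / 40) := Real.one_le_rpow (by linarith) (by positivity)
  have hsmall := convSum_splitsBetween_root_le hα hg (by linarith) hK hX hXY hYX hH hHX one_pos
    hR le_rfl (by lia) hεR hKX
  have hmid := sum_convSum_splitsBetween_le hα hg (by linarith) hK hεK hε0.le hX hXY hYX hH hHX hεR
  have hexc := convSum_exists_dvd_le_of_sum_le hg (by positivity) (by linarith) hX hεX
    hY hYX hH hHX (fun d hd => pos_and_le_of_mem_moduli hX hε0 hXY hεR hd) hS (hsum hX hε0 hεR)
  have hsplit := convSum_true_le (X := X) (H := H) hg.nonneg (by linarith) hY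
    (Real.one_lt_exp_iff.2 (by positivity : 0 < 8 * K)) hM hR
  rw [Real.log_exp] at hsplit
  rw [Real.one_rpow, mul_one] at hsmall
  calc _ ≤ _ := hsplit
    _ ≤ _ := add_le_add hsmall (add_le_add hmid hexc)
    _ = _ := by rw [← add_mul, ← add_mul]

end Assembly

end Shiu

theorem stmt_3_general (α β ε : ℝ) (hα : 1 ≤ α) (hε : ε ∈ Set.Ioc (0 : ℝ) 1) :
    ∃ C : ℝ, ∀ g : ℕ → ℝ, Shiu.ShiuClass α β (ε / 1000) g →
      ∀ X Y H : ℝ, 2 ≤ X → X ^ ε ≤ Y → Y ≤ X → 0 ≤ H → H ≤ X →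
        ∑ l ∈ Icc 1 ⌊H⌋₊, ∑ n ∈ Icc ⌈X⌉₊ ⌊X + Y⌋₊, g n * g (n + l) ≤
          C * (H * Y * Shiu.shiuProd g X ^ 2) := by
  obtain ⟨hε0, hε1⟩ := hε
  obtain ⟨T, C, hlarge⟩ := Shiu.exists_convSum_le_of_le_log β hα hε0 hε1
  refine ⟨max C (54 * β ^ 2 * Real.exp (4 * T + 12)), fun g hg X Y H hX hXY hYX hH hHX => ?_⟩
  have hX1 : 1 ≤ X := by linarith
  have hY : 1 ≤ Y := (Real.one_le_rpow hX1 hε0.le).trans hXY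
  refine (Shiu.convSum_true g X Y H).symm.le.trans ?_
  rcases le_total T (Real.log X) with hT | hT
  · exact (hlarge hg hT hX hXY hYX hH hHX).trans (by gcongr; exact le_max_left _ _)
  · exact (Shiu.convSum_le_of_log_le hg (by positivity) (by linarith) hX hY hYX hH hHX hT).trans
      (by gcongr; exact le_max_right _ _)

theorem stmt_3 (α β ε : ℝ) (hα : 1 ≤ α) (hβ : 1 ≤ β) (hε : ε ∈ Set.Ioo (0 : ℝ) 1) :
    ∃ C : ℝ, ∀ g : ℕ → ℝ,
      (g 1 = 1) →
      (∀ m n : ℕ, Nat.Coprime m n → g (m * n) = g m * g n) →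
      (∀ n : ℕ, 0 ≤ g n) →
      (∀ p : ℕ, p.Prime → ∀ v : ℕ, 1 ≤ v → g (p ^ v) ≤ α ^ v) →
      (∀ n : ℕ, 1 ≤ n → g n ≤ β * (n : ℝ) ^ (ε ^ 3 / 1000)) →
      ∀ X Y H : ℝ, 2 ≤ X ^ ε → X ^ ε ≤ Y → Y ≤ X → 1 ≤ H → H ≤ X →
        ∑ l ∈ Finset.Icc 1 ⌊H⌋₊, ∑ n ∈ Finset.Icc ⌈X⌉₊ ⌊X + Y⌋₊, g n * g (n + l)
          ≤ C * H * Y *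
            (∏ p ∈ (Finset.Icc 1 ⌊X⌋₊).filter Nat.Prime, (1 + (g p - 1) / (p : ℝ))) ^ 2 := by
  obtain ⟨C, hC⟩ := stmt_3_general α β ε hα ⟨hε.1, hε.2.le⟩
  refine ⟨C, fun g hone hmul hnonneg hpow hgrowth X Y H hX hXY hYX hH hHX => ?_⟩
  have hg : Shiu.ShiuClass α β (ε / 1000) g :=
    .mono (by linarith [pow_le_of_le_one hε.1.le hε.2.le three_ne_zero])
      ⟨hone, hmul, hnonneg, hpow, hgrowth⟩
  exact (hC g hg X Y H (by linarith) hXY hYX (by linarith) hHX).trans_eq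
    (by rw [Shiu.shiuProd]; ring)
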